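/- arXiv:2003.10069 — 2 statements merged into one kernel-verified Lean document; each statement's English description precedes it below -/
import Mathlib

section
/- There is an absolute constant C > 0 such that the following holds. Fix η > 0 and ε ∈ (0,1), and let E ⊆ ℝ^d be a finite set with |E| = n. Let k ≥ C log(4n/η), and suppose Φ ∈ ℝ^{m×d} satisfies the Restricted Isometry Property of order k and level δ for some δ ≤ ε/4. Let ξ be a uniform random vector in {±1}^d conditioned on ∏_{i=1}^d ξ_i = 1, and let D_ξ be the d×d diagonal matrix with diagonal ξ. Then with probability at least 1 − η, (1−ε)‖x‖₂² ≤ ‖Φ D_ξ x‖₂² ≤ (1+ε)‖x‖₂² holds simultaneously for all x ∈ E. -/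
noncomputable section

open MeasureTheory Real
open scoped ENNReal

namespace KacJL

/-- The Euclidean norm on `ℝ^d`. -/
def l2norm {d : ℕ} (x : Fin d → ℝ) : ℝ := Real.sqrt (∑ i, x i ^ 2)

/-- The restricted isometry constant `δ_s(A)` of a matrix `A`. -/
def ripConst {m d : ℕ} (A : Matrix (Fin m) (Fin d) ℝ) (s : ℕ) : ℝ :=
  sSup {r : ℝ | ∃ x : Fin d → ℝ, l2norm x = 1 ∧
    (Finset.univ.filter fun i => x i ≠ 0).card ≤ s ∧ r = |l2norm (A.mulVec x) ^ 2 - 1|}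

/-- The uniform distribution on sign vectors `ξ ∈ {±1}^d` conditioned on `∏ i ξ_i = 1`. -/
def signMeasure (d : ℕ) : Measure (Fin d → ℝ) :=
  ((2 ^ (d - 1) : ℕ) : ℝ≥0∞)⁻¹ •
    (Measure.count.restrict
      {v : Fin d → ℝ | (∀ i, v i = 1 ∨ v i = -1) ∧ ∏ i, v i = 1})

section Prob
variable {ι κ : Type*} [Fintype ι] [DecidableEq ι] [Fintype κ]

/-- sign of a boolean -/
def sg (b : Bool) : ℝ := if b then 1 else -1

lemma sg_sq (b : Bool) : sg b * sg b = 1 := by cases b <;> simp [sg]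

/-- average over all sign patterns -/
def Ex (f : (ι → Bool) → ℝ) : ℝ := (∑ ω, f ω) / 2 ^ (Fintype.card ι)

lemma card_om : (Finset.univ : Finset (ι → Bool)).card = 2 ^ (Fintype.card ι) := by
  simp

lemma Ex_mono {f g : (ι → Bool) → ℝ} (h : ∀ ω, f ω ≤ g ω) : Ex f ≤ Ex g := by
  unfold Ex
  gcongr with ω
  exact h ω

lemma Ex_const (c : ℝ) : Ex (fun _ : ι → Bool => c) = c := by
  unfold Ex
  rw [Finset.sum_const, card_om]
  simp

lemma Ex_mul (c : ℝ) (f : (ι → Bool) → ℝ) : Ex (fun ω => c * f ω) = c * Ex f := by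
  unfold Ex
  rw [← Finset.mul_sum, mul_div_assoc]

lemma Ex_nonneg {f : (ι → Bool) → ℝ} (h : ∀ ω, 0 ≤ f ω) : 0 ≤ Ex f := by
  have := Ex_mono (f := fun _ => (0:ℝ)) (g := f) h
  rwa [Ex_const] at this

lemma Ex_comm (f : (ι → Bool) → (ι → Bool) → ℝ) :
    Ex (fun ω => Ex (fun ω' => f ω ω')) = Ex (fun ω' => Ex (fun ω => f ω ω')) := by
  unfold Ex
  simp only [← Finset.sum_div]
  rw [Finset.sum_comm]

lemma Ex_sum {α : Type*} (s : Finset α) (f : α → (ι → Bool) → ℝ) :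
    Ex (fun ω => ∑ a ∈ s, f a ω) = ∑ a ∈ s, Ex (f a) := by
  unfold Ex
  rw [Finset.sum_comm, Finset.sum_div]

lemma Ex_sq_le (f : (ι → Bool) → ℝ) : (Ex f) ^ 2 ≤ Ex (fun ω => f ω ^ 2) := by
  unfold Ex
  have h := sq_sum_le_card_mul_sum_sq (s := (Finset.univ : Finset (ι → Bool))) (f := f)
  rw [card_om] at h
  push_cast at h
  have h2 : (0:ℝ) < 2 ^ (Fintype.card ι) := by positivity
  rw [div_pow, div_le_div_iff₀ (by positivity) h2]
  nlinarith

lemma Ex_exp_jensen (f : (ι → Bool) → ℝ) : exp (Ex f) ≤ Ex (fun ω => exp (f ω)) := by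
  have h := convexOn_exp.map_sum_le (t := (Finset.univ : Finset (ι → Bool)))
    (w := fun _ => (1:ℝ) / 2 ^ (Fintype.card ι)) (p := f)
    (fun _ _ => by positivity) (by rw [Finset.sum_const, card_om]; simp) (fun _ _ => trivial)
  simp only [smul_eq_mul, ← Finset.mul_sum] at h
  unfold Ex
  have e : ∀ a : ℝ, a / 2 ^ (Fintype.card ι) = 1 / 2 ^ (Fintype.card ι) * a := by intro a; ring
  rw [e (∑ ω, f ω), e (∑ ω, (fun ω => exp (f ω)) ω)]
  exact h

lemma Ex_le_some (f : (ι → Bool) → ℝ) : ∃ ω, Ex f ≤ f ω := by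
  obtain ⟨ω, -, h⟩ := Finset.exists_max_image Finset.univ f Finset.univ_nonempty
  refine ⟨ω, ?_⟩
  rw [← Ex_const (ι := ι) (f ω)]
  exact Ex_mono (fun ω' => h ω' (Finset.mem_univ _))

/-- Hoeffding -/
lemma hoeffding (c : ι → ℝ) :
    Ex (fun ω : ι → Bool => exp (∑ i, c i * sg (ω i))) ≤ exp ((∑ i, c i ^ 2) / 2) := by
  unfold Ex
  have h : ∑ ω : ι → Bool, exp (∑ i, c i * sg (ω i)) = ∏ i, ∑ b : Bool, exp (c i * sg b) := by
    rw [Finset.prod_univ_sum, Fintype.piFinset_univ]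
    simp only [exp_sum]
  rw [h, div_le_iff₀ (by positivity)]
  have h3 : exp ((∑ i, c i ^ 2) / 2) * 2 ^ (Fintype.card ι) = ∏ i, (exp (c i ^ 2 / 2) * 2) := by
    rw [Finset.prod_mul_distrib, ← exp_sum, Finset.sum_div]
    simp
  rw [h3]
  apply Finset.prod_le_prod
  · intro i _; positivity
  · intro i _
    have := Real.cosh_le_exp_half_sq (c i)
    rw [Real.cosh_eq] at this
    simp [sg]
    linarith

/-- combine two patterns along a mask -/
def comb (t ω ω' : ι → Bool) : ι → Bool := fun i => if t i then ω i else ω' i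

lemma Ex_comb (t : ι → Bool) (f : (ι → Bool) → ℝ) :
    Ex f = Ex (fun ω => Ex (fun ω' => f (comb t ω ω'))) := by
  have h : ∑ p : (ι → Bool) × (ι → Bool), f (comb t p.1 p.2)
      = ∑ p : (ι → Bool) × (ι → Bool), f p.1 := by
    have hi : Function.Involutive (fun p : (ι → Bool) × (ι → Bool) =>
        (comb t p.1 p.2, comb t p.2 p.1)) := by
      intro p
      ext i <;> simp only [comb] <;> split_ifs <;> rfl
    exact (Equiv.sum_comp hi.toPerm (fun p => f p.1))
  have h2 : Ex (fun ω : ι → Bool => Ex (fun _ : ι → Bool => f ω)) = Ex f := by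
    simp only [Ex_const]
  rw [← h2]
  unfold Ex
  simp only [← Finset.sum_div]
  rw [Fintype.sum_prod_type, Fintype.sum_prod_type] at h
  rw [h]

/-- mask -/
def msk (b : Bool) : ℝ := if b then 1 else 0

lemma cond_hoeffding (M : ι → ι → ℝ) (t : ι → Bool) :
    Ex (fun ω : ι → Bool => exp (∑ i, ∑ j, msk (t i) * msk (!t j) * M i j * sg (ω i) * sg (ω j)))
    ≤ Ex (fun ω : ι → Bool => exp ((∑ i, (∑ j, msk (t i) * msk (!t j) * M i j * sg (ω j)) ^ 2) / 2)) := by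
  rw [Ex_comb t, Ex_comm]
  apply Ex_mono
  intro ω'
  refine le_trans (le_of_eq ?_) (hoeffding _)
  congr 1
  funext ω
  congr 1
  apply Finset.sum_congr rfl
  intro i _
  rw [Finset.sum_mul]
  apply Finset.sum_congr rfl
  intro j _
  unfold comb msk
  cases hi : t i <;> cases hj : t j <;> simp [hi, hj]
  ring

lemma Ex_flip (i : ι) (f : (ι → Bool) → ℝ)
    (h : ∀ ω, f (Function.update ω i (!ω i)) = - f ω) : Ex f = 0 := by
  have hi : Function.Involutive (fun ω : ι → Bool => Function.update ω i (!ω i)) := by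
    intro ω; simp
  have h2 := Equiv.sum_comp (Function.Involutive.toPerm _ hi) f
  have h3 : ∑ ω : ι → Bool, f ((Function.Involutive.toPerm _ hi) ω) = ∑ ω, - f ω :=
    Finset.sum_congr rfl (fun ω _ => h ω)
  rw [h3, Finset.sum_neg_distrib] at h2
  have : ∑ ω, f ω = 0 := by linarith
  unfold Ex; rw [this]; simp

lemma Ex_mask {i j : ι} (hij : i ≠ j) :
    Ex (fun t : ι → Bool => msk (t i) * msk (!t j)) = 1 / 4 := by
  have e : (fun t : ι → Bool => msk (t i) * msk (!t j)) =
      fun t => ∑ a : Fin 4, (![fun _ => 1/4, fun t => sg (t i) / 4, fun t => - sg (t j) / 4,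
        fun t => - (sg (t i) * sg (t j)) / 4] : Fin 4 → (ι → Bool) → ℝ) a t := by
    funext t
    simp [Fin.sum_univ_four]
    cases t i <;> cases t j <;> simp [msk, sg] <;> norm_num
  rw [e, Ex_sum, Fin.sum_univ_four]
  simp only [Matrix.cons_val]
  rw [Ex_const, Ex_flip i, Ex_flip j, Ex_flip i]
  · norm_num
  · intro ω; rw [Function.update_self, Function.update_of_ne hij.symm]
    cases ω i <;> cases ω j <;> simp [sg] <;> norm_num
  · intro ω; rw [Function.update_self]
    cases ω j <;> simp [sg] <;> norm_num
  · intro ω; rw [Function.update_self]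
    cases ω i <;> simp [sg] <;> norm_num

/-- decoupling -/
lemma decouple (M : ι → ι → ℝ) (hM : ∀ i, M i i = 0) :
    ∃ t : ι → Bool, Ex (fun ω : ι → Bool => exp (∑ i, ∑ j, M i j * sg (ω i) * sg (ω j)))
    ≤ Ex (fun ω : ι → Bool => exp (8 * ∑ i, (∑ j, msk (t i) * msk (!t j) * M i j * sg (ω j)) ^ 2)) := by
  have key : ∀ ω : ι → Bool, ∑ i, ∑ j, M i j * sg (ω i) * sg (ω j) =
      Ex (fun t : ι → Bool => ∑ i, ∑ j, msk (t i) * msk (!t j) * (4 * M i j) * sg (ω i) * sg (ω j)) := by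
    intro ω
    rw [Ex_sum]
    apply Finset.sum_congr rfl
    intro i _
    rw [Ex_sum]
    apply Finset.sum_congr rfl
    intro j _
    by_cases hij : i = j
    · subst hij
      simp [hM, Ex_const]
    · have : (fun t : ι → Bool => msk (t i) * msk (!t j) * (4 * M i j) * sg (ω i) * sg (ω j)) =
        fun t => (4 * M i j * sg (ω i) * sg (ω j)) * (msk (t i) * msk (!t j)) := by
        funext t; ring
      rw [this, Ex_mul, Ex_mask hij]
      ring
  have h1 : Ex (fun ω : ι → Bool => exp (∑ i, ∑ j, M i j * sg (ω i) * sg (ω j))) ≤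
      Ex (fun t : ι → Bool => Ex (fun ω : ι → Bool =>
        exp (∑ i, ∑ j, msk (t i) * msk (!t j) * (4 * M i j) * sg (ω i) * sg (ω j)))) := by
    rw [Ex_comm]
    apply Ex_mono
    intro ω
    rw [key]
    exact Ex_exp_jensen _
  obtain ⟨t, ht⟩ := Ex_le_some (fun t : ι → Bool => Ex (fun ω : ι → Bool =>
        exp (∑ i, ∑ j, msk (t i) * msk (!t j) * (4 * M i j) * sg (ω i) * sg (ω j))))
  refine ⟨t, h1.trans (ht.trans ((cond_hoeffding (fun i j => 4 * M i j) t).trans (le_of_eq ?_)))⟩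
  congr 1
  funext ω
  congr 1
  rw [Finset.mul_sum, Finset.sum_div]
  apply Finset.sum_congr rfl
  intro i _
  have : ∑ j, msk (t i) * msk (!t j) * (4 * M i j) * sg (ω j) =
    4 * ∑ j, msk (t i) * msk (!t j) * M i j * sg (ω j) := by
    rw [Finset.mul_sum]
    exact Finset.sum_congr rfl (fun j _ => by ring)
  rw [this]; ring

/-- one step of the self-bounding recursion -/
lemma gstep (B : κ → ι → ℝ) (μ b F : ℝ) (hμ : 0 ≤ μ) (hb : 16 * μ * b ≤ 1)
    (hop : ∀ y : κ → ℝ, ∑ j, (∑ r, B r j * y r) ^ 2 ≤ b * ∑ r, y r ^ 2)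
    (hF : ∑ r, ∑ j, B r j ^ 2 ≤ F) :
    ∃ t : ι → Bool, (Ex (fun ω : ι → Bool => exp (μ * ∑ r, (∑ j, B r j * sg (ω j)) ^ 2))) ^ 2
      ≤ exp (2 * μ * F) *
        Ex (fun ω : ι → Bool => exp (μ * ∑ r, (∑ j, (B r j * msk (t j)) * sg (ω j)) ^ 2)) := by
  set N : ι → ι → ℝ := fun i j => if i = j then 0 else μ * ∑ r, B r i * B r j with hN
  obtain ⟨t, ht⟩ := decouple N (fun i => by simp [hN])
  refine ⟨fun j => !t j, ?_⟩
  have e1 : ∀ ω : ι → Bool, μ * ∑ r, (∑ j, B r j * sg (ω j)) ^ 2 ≤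
      μ * F + ∑ i, ∑ j, N i j * sg (ω i) * sg (ω j) := by
    intro ω
    have e2 : μ * ∑ r, (∑ j, B r j * sg (ω j)) ^ 2 =
        ∑ i, ∑ j, (μ * ∑ r, B r i * B r j) * sg (ω i) * sg (ω j) := by
      have : ∀ r, (∑ j, B r j * sg (ω j)) ^ 2 =
          ∑ i, ∑ j, B r i * B r j * (sg (ω i) * sg (ω j)) := by
        intro r
        rw [sq, Finset.sum_mul_sum]
        exact Finset.sum_congr rfl (fun i _ => Finset.sum_congr rfl (fun j _ => by ring))
      simp only [this]
      rw [Finset.sum_comm, Finset.mul_sum]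
      apply Finset.sum_congr rfl
      intro i _
      rw [Finset.sum_comm, Finset.mul_sum]
      apply Finset.sum_congr rfl
      intro j _
      rw [← Finset.sum_mul]; ring
    have e3 : ∀ i j, (μ * ∑ r, B r i * B r j) * sg (ω i) * sg (ω j) =
        N i j * sg (ω i) * sg (ω j) + if i = j then μ * ∑ r, B r i ^ 2 else 0 := by
      intro i j
      by_cases h : i = j
      · subst h
        simp only [hN, if_true]
        rw [mul_assoc _ (sg _), sg_sq]
        simp [sq]
      · simp [hN, h]
    rw [e2]
    simp only [e3, Finset.sum_add_distrib, Finset.sum_ite_eq, Finset.mem_univ, if_true]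
    rw [← Finset.mul_sum, Finset.sum_comm (s := (Finset.univ : Finset ι)) (t := (Finset.univ : Finset κ))]
    nlinarith [mul_le_mul_of_nonneg_left hF hμ]
  have e4 : ∀ ω : ι → Bool, 8 * ∑ i, (∑ j, msk (t i) * msk (!t j) * N i j * sg (ω j)) ^ 2 ≤
      (μ * ∑ r, (∑ j, (B r j * msk (!t j)) * sg (ω j)) ^ 2) / 2 := by
    intro ω
    set y : κ → ℝ := fun r => ∑ j, (B r j * msk (!t j)) * sg (ω j) with hy
    have h1 : ∀ i, (∑ j, msk (t i) * msk (!t j) * N i j * sg (ω j)) ^ 2 ≤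
        μ ^ 2 * (∑ r, B r i * y r) ^ 2 := by
      intro i
      have h2 : ∑ j, msk (t i) * msk (!t j) * N i j * sg (ω j) =
          msk (t i) * (μ * ∑ r, B r i * y r) := by
        simp only [hy, Finset.mul_sum]
        rw [Finset.sum_comm]
        apply Finset.sum_congr rfl
        intro j _
        by_cases h : i = j
        · subst h
          cases t i <;> simp [msk]
        · simp only [hN, h, if_false, Finset.mul_sum, Finset.sum_mul]
          exact Finset.sum_congr rfl (fun r _ => by ring)
      rw [h2, mul_pow, mul_pow]
      have : msk (t i) ^ 2 ≤ 1 := by cases t i <;> simp [msk]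
      have h0 : 0 ≤ μ ^ 2 * (∑ r, B r i * y r) ^ 2 := by positivity
      nlinarith
    have h3 : ∑ i, (∑ j, msk (t i) * msk (!t j) * N i j * sg (ω j)) ^ 2 ≤
        μ ^ 2 * (b * ∑ r, y r ^ 2) := by
      refine (Finset.sum_le_sum (fun i _ => h1 i)).trans ?_
      rw [← Finset.mul_sum]
      exact mul_le_mul_of_nonneg_left (hop y) (by positivity)
    have h4 : 0 ≤ μ * ∑ r, y r ^ 2 := mul_nonneg hμ (Finset.sum_nonneg (fun r _ => sq_nonneg _))
    nlinarith
  have h5 : Ex (fun ω : ι → Bool => exp (μ * ∑ r, (∑ j, B r j * sg (ω j)) ^ 2)) ≤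
      exp (μ * F) * Ex (fun ω : ι → Bool =>
        exp ((μ * ∑ r, (∑ j, (B r j * msk (!t j)) * sg (ω j)) ^ 2) / 2)) := by
    calc _ ≤ Ex (fun ω : ι → Bool => exp (μ * F) * exp (∑ i, ∑ j, N i j * sg (ω i) * sg (ω j))) := by
          apply Ex_mono; intro ω; rw [← exp_add]; exact exp_le_exp.mpr (e1 ω)
      _ = exp (μ * F) * Ex (fun ω : ι → Bool => exp (∑ i, ∑ j, N i j * sg (ω i) * sg (ω j))) := Ex_mul _ _
      _ ≤ _ := by
          apply mul_le_mul_of_nonneg_left _ (exp_pos _).le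
          exact ht.trans (Ex_mono (fun ω => exp_le_exp.mpr (e4 ω)))
  have h0 : 0 ≤ Ex (fun ω : ι → Bool => exp (μ * ∑ r, (∑ j, B r j * sg (ω j)) ^ 2)) :=
    Ex_nonneg (fun ω => (exp_pos _).le)
  refine (pow_le_pow_left₀ h0 h5 2).trans ?_
  rw [mul_pow]
  apply mul_le_mul
  · rw [← exp_nat_mul]; apply le_of_eq; congr 1; push_cast; ring
  · refine (Ex_sq_le _).trans (le_of_eq ?_)
    congr 1; funext ω
    rw [← exp_nat_mul]; congr 1; push_cast; ring
  · positivity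
  · positivity

/-- mgf of a quadratic form `‖Bξ‖²` -/
lemma mgf_sq (B : κ → ι → ℝ) (μ b F : ℝ) (hμ : 0 ≤ μ) (hb : 16 * μ * b ≤ 1)
    (hop : ∀ y : κ → ℝ, ∑ j, (∑ r, B r j * y r) ^ 2 ≤ b * ∑ r, y r ^ 2)
    (hF : ∑ r, ∑ j, B r j ^ 2 ≤ F) :
    Ex (fun ω : ι → Bool => exp (μ * ∑ r, (∑ j, B r j * sg (ω j)) ^ 2)) ≤ exp (2 * μ * F) := by
  set G : (ι → Bool) → ℝ := fun t =>
    Ex (fun ω : ι → Bool => exp (μ * ∑ r, (∑ j, (B r j * msk (t j)) * sg (ω j)) ^ 2)) with hG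
  obtain ⟨t₀, -, hmax⟩ := Finset.exists_max_image Finset.univ G Finset.univ_nonempty
  have hm : ∀ b : Bool, msk b ^ 2 ≤ 1 := by intro b; cases b <;> simp [msk]
  obtain ⟨t, ht⟩ := gstep (fun r j => B r j * msk (t₀ j)) μ b F hμ hb (by
      intro y
      refine le_trans (Finset.sum_le_sum (fun j _ => ?_)) (hop y)
      have : ∑ r, B r j * msk (t₀ j) * y r = msk (t₀ j) * ∑ r, B r j * y r := by
        rw [Finset.mul_sum]; exact Finset.sum_congr rfl (fun r _ => by ring)
      rw [this, mul_pow]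
      exact mul_le_of_le_one_left (sq_nonneg _) (hm _)) (by
      refine le_trans (Finset.sum_le_sum (fun r _ => Finset.sum_le_sum (fun j _ => ?_))) hF
      rw [mul_pow]
      exact mul_le_of_le_one_right (sq_nonneg _) (hm _))
  have h1 : G t₀ ^ 2 ≤ exp (2 * μ * F) * G (fun j => t₀ j && t j) := by
    refine ht.trans (le_of_eq ?_)
    simp only [hG]
    congr 2
    funext ω
    congr 3
    funext r
    congr 2
    funext j
    cases t₀ j <;> cases t j <;> simp [msk]
  have h2 : G t₀ ^ 2 ≤ exp (2 * μ * F) * G t₀ :=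
    h1.trans (mul_le_mul_of_nonneg_left (hmax _ (Finset.mem_univ _)) (exp_pos _).le)
  have h3 : 0 ≤ G t₀ := Ex_nonneg (fun ω => (exp_pos _).le)
  have h4 : G t₀ ≤ exp (2 * μ * F) := by
    by_contra hc
    push Not at hc
    have : 0 < G t₀ := lt_trans (exp_pos _) hc
    nlinarith
  have h5 := hmax (fun _ => true) (Finset.mem_univ _)
  refine le_trans (le_of_eq ?_) (h5.trans h4)
  simp [hG, msk]

end Prob

section Blocks
variable {ι : Type*} [Fintype ι] [DecidableEq ι]

/-- bilinear form of a kernel -/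
def bf (K : ι → ι → ℝ) (u w : ι → ℝ) : ℝ := ∑ i, ∑ j, K i j * u i * w j

/-- restricted isometry in terms of the Gram matrix -/
def Rip (K : ι → ι → ℝ) (k : ℕ) (δ : ℝ) : Prop :=
  ∀ u : ι → ℝ, (Finset.univ.filter fun i => u i ≠ 0).card ≤ k →
    |bf K u u - ∑ i, u i ^ 2| ≤ δ * ∑ i, u i ^ 2

lemma bf_polar (K : ι → ι → ℝ) (hK : ∀ i j, K i j = K j i) (u w : ι → ℝ) (t : ℝ) :
    bf K (fun i => t * u i + w i) (fun i => t * u i + w i) -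
      bf K (fun i => t * u i - w i) (fun i => t * u i - w i) = 4 * t * bf K u w := by
  have h : bf K u w = bf K w u := by
    unfold bf
    rw [Finset.sum_comm]
    exact Finset.sum_congr rfl (fun i _ => Finset.sum_congr rfl (fun j _ => by rw [hK]; ring))
  have h2 : 4 * t * bf K u w = 2 * t * bf K u w + 2 * t * bf K w u := by rw [← h]; ring
  rw [h2]
  unfold bf
  simp only [Finset.mul_sum, ← Finset.sum_sub_distrib, ← Finset.sum_add_distrib]
  exact Finset.sum_congr rfl (fun i _ => Finset.sum_congr rfl (fun j _ => by ring))

lemma rip_disjoint {K : ι → ι → ℝ} (hK : ∀ i j, K i j = K j i) {k s : ℕ} {δ : ℝ}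
    (hR : Rip K k δ) (hs : 2 * s ≤ k) (u w : ι → ℝ)
    (hu : (Finset.univ.filter fun i => u i ≠ 0).card ≤ s)
    (hw : (Finset.univ.filter fun i => w i ≠ 0).card ≤ s)
    (hd : ∀ i, u i = 0 ∨ w i = 0) :
    (bf K u w) ^ 2 ≤ δ ^ 2 * (∑ i, u i ^ 2) * ∑ i, w i ^ 2 := by
  have card_aux : ∀ v : ι → ℝ, (∀ i, v i ≠ 0 → u i ≠ 0 ∨ w i ≠ 0) →
      (Finset.univ.filter fun i => v i ≠ 0).card ≤ k := by
    intro v hv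
    have : (Finset.univ.filter fun i => v i ≠ 0) ⊆
        (Finset.univ.filter fun i => u i ≠ 0) ∪ (Finset.univ.filter fun i => w i ≠ 0) := by
      intro i hi
      simp only [Finset.mem_union, Finset.mem_filter, Finset.mem_univ, true_and] at hi ⊢
      exact hv i hi
    have h1 := Finset.card_le_card this
    have h2 := Finset.card_union_le (Finset.univ.filter fun i => u i ≠ 0)
      (Finset.univ.filter fun i => w i ≠ 0)
    omega
  have key : ∀ t : ℝ, 0 ≤ (δ * ∑ i, u i ^ 2) * (t * t) + (-2 * bf K u w) * t + δ * ∑ i, w i ^ 2 := by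
    intro t
    have n1 : ∑ i, (t * u i + w i) ^ 2 = t ^ 2 * ∑ i, u i ^ 2 + ∑ i, w i ^ 2 := by
      rw [Finset.mul_sum, ← Finset.sum_add_distrib]
      refine Finset.sum_congr rfl (fun i _ => ?_)
      rcases hd i with h | h <;> rw [h] <;> ring
    have n2 : ∑ i, (t * u i - w i) ^ 2 = t ^ 2 * ∑ i, u i ^ 2 + ∑ i, w i ^ 2 := by
      rw [Finset.mul_sum, ← Finset.sum_add_distrib]
      refine Finset.sum_congr rfl (fun i _ => ?_)
      rcases hd i with h | h <;> rw [h] <;> ring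
    have r1 := hR (fun i => t * u i + w i) (card_aux _ (by
      intro i hi
      by_contra hc
      push Not at hc
      simp [hc.1, hc.2] at hi))
    have r2 := hR (fun i => t * u i - w i) (card_aux _ (by
      intro i hi
      by_contra hc
      push Not at hc
      simp [hc.1, hc.2] at hi))
    rw [n1] at r1
    rw [n2] at r2
    have := bf_polar K hK u w t
    have r1' := (abs_le.mp r1).2
    have r2' := (abs_le.mp r2).1
    nlinarith
  have := discrim_le_zero key
  unfold discrim at this
  nlinarith

/-- A decomposition into blocks of size `≤ s` with decreasing magnitudes. -/
structure Blk (x : ι → ℝ) (s : ℕ) where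
  blk : ι → ℕ
  D : ℕ
  a : ℕ → ℝ
  lt : ∀ i, blk i < D
  card : ∀ L, (Finset.univ.filter fun i => blk i = L).card ≤ s
  le : ∀ i, blk i ≠ 0 → |x i| ≤ a (blk i)
  nonneg : ∀ L, 0 ≤ a L
  sum : s * ∑ L ∈ Finset.range D, a L ^ 2 ≤ ∑ i, x i ^ 2

variable {x : ι → ℝ} {s : ℕ} (β : Blk x s)

/-- restriction of a vector to a block -/
def Blk.res (L : ℕ) (u : ι → ℝ) : ι → ℝ := fun i => if β.blk i = L then u i else 0

lemma Blk.fib (f : ι → ℝ) :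
    ∑ i, f i = ∑ L ∈ Finset.range β.D, ∑ i, (if β.blk i = L then f i else 0) := by
  rw [Finset.sum_comm]
  refine Finset.sum_congr rfl (fun i _ => ?_)
  rw [Finset.sum_ite_eq, if_pos (Finset.mem_range.mpr (β.lt i))]

lemma Blk.card_supp (L : ℕ) (u : ι → ℝ) (hu : ∀ i, β.blk i ≠ L → u i = 0) :
    (Finset.univ.filter fun i => u i ≠ 0).card ≤ s := by
  refine (Finset.card_le_card ?_).trans (β.card L)
  intro i hi
  simp only [Finset.mem_filter, Finset.mem_univ, true_and] at hi ⊢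
  by_contra hc
  exact hi (hu i hc)

lemma Blk.res_sq (L : ℕ) (u : ι → ℝ) :
    ∑ i, (β.res L u i) ^ 2 = ∑ i, (if β.blk i = L then u i ^ 2 else 0) := by
  refine Finset.sum_congr rfl (fun i _ => ?_)
  unfold Blk.res
  split_ifs <;> simp

lemma Blk.res_mul_sq (L : ℕ) (hL : L ≠ 0) (u : ι → ℝ) :
    ∑ i, (β.res L (fun i => x i * u i) i) ^ 2 ≤ β.a L ^ 2 * ∑ i, (β.res L u i) ^ 2 := by
  rw [Finset.mul_sum]
  refine Finset.sum_le_sum (fun i _ => ?_)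
  unfold Blk.res
  split_ifs with h
  · have h1 := β.le i (by omega)
    rw [h] at h1
    rw [mul_pow]
    have : x i ^ 2 ≤ β.a L ^ 2 := by rw [← sq_abs]; exact pow_le_pow_left₀ (abs_nonneg _) h1 2
    exact mul_le_mul_of_nonneg_right this (sq_nonneg _)
  · simp

variable {K : ι → ι → ℝ} {k : ℕ} {δ : ℝ}


lemma Blk.row (hK : ∀ i j, K i j = K j i) (hR : Rip K k δ) (hs : 2 * s ≤ k)
    (J L : ℕ) (hL : L ≠ 0) (hJL : L ≠ J) (u : ι → ℝ) (hu : ∀ i, β.blk i ≠ J → u i = 0) :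
    ∑ j, (if β.blk j = L then (x j * ∑ i, K i j * u i) ^ 2 else 0) ≤
      δ ^ 2 * β.a L ^ 2 * ∑ i, u i ^ 2 := by
  set w : ι → ℝ := fun j => x j * ∑ i, K i j * u i with hw
  set S := ∑ j, (β.res L w j) ^ 2 with hS
  have e1 : bf K u (β.res L (fun i => x i * β.res L w i)) = S := by
    unfold bf
    rw [Finset.sum_comm, hS]
    refine Finset.sum_congr rfl (fun j _ => ?_)
    unfold Blk.res
    split_ifs with h
    · simp only [h, if_true]; rw [hw, ← Finset.sum_mul]; ring
    · simp
  have h1 := rip_disjoint hK hR hs u (β.res L (fun i => x i * β.res L w i))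
    (β.card_supp J u hu) (β.card_supp L _ (fun i hi => by simp [Blk.res, hi]))
    (by
      intro i
      by_cases h : β.blk i = L
      · left; apply hu; omega
      · right; simp [Blk.res, h])
  have h2 := β.res_mul_sq L hL (β.res L w)
  have e2 : ∑ i, (β.res L (β.res L w) i) ^ 2 = S := by
    refine Finset.sum_congr rfl (fun i _ => ?_)
    unfold Blk.res; split_ifs <;> rfl
  rw [e2] at h2
  rw [e1] at h1
  have h3 : ∑ j, (if β.blk j = L then (x j * ∑ i, K i j * u i) ^ 2 else 0) = S := by
    rw [hS, β.res_sq]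
  rw [h3]
  have hS0 : 0 ≤ S := Finset.sum_nonneg (fun _ _ => sq_nonneg _)
  have hU : 0 ≤ δ ^ 2 * ∑ i, u i ^ 2 :=
    mul_nonneg (sq_nonneg _) (Finset.sum_nonneg (fun _ _ => sq_nonneg _))
  have h4 : S ^ 2 ≤ (δ ^ 2 * β.a L ^ 2 * ∑ i, u i ^ 2) * S := by
    refine h1.trans ((mul_le_mul_of_nonneg_left h2 hU).trans (le_of_eq (by ring)))
  by_contra hc
  push Not at hc
  have : 0 < S := lt_of_le_of_lt (by nlinarith [mul_nonneg hU (sq_nonneg (β.a L))]) hc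
  nlinarith

lemma Blk.rowsum (hK : ∀ i j, K i j = K j i) (hR : Rip K k δ) (hs : 2 * s ≤ k)
    (J : ℕ) (u : ι → ℝ) (hu : ∀ i, β.blk i ≠ J → u i = 0) :
    ∑ j, (if β.blk j ≠ 0 ∧ β.blk j ≠ J then (x j * ∑ i, K i j * u i) ^ 2 else 0) ≤
      δ ^ 2 * (∑ L ∈ Finset.range β.D, β.a L ^ 2) * ∑ i, u i ^ 2 := by
  rw [β.fib, Finset.mul_sum (Finset.range β.D), Finset.sum_mul]
  refine Finset.sum_le_sum (fun L _ => ?_)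
  have h0 : 0 ≤ δ ^ 2 * β.a L ^ 2 * ∑ i, u i ^ 2 := 
    mul_nonneg (by positivity) (Finset.sum_nonneg (fun _ _ => sq_nonneg _))
  by_cases h : L ≠ 0 ∧ L ≠ J
  · refine le_trans (le_of_eq ?_) (β.row hK hR hs J L h.1 h.2 u hu)
    refine Finset.sum_congr rfl (fun j _ => ?_)
    by_cases hj : β.blk j = L
    · simp only [hj, if_true]; rw [if_pos h]
    · simp [hj]
  · refine le_trans (le_of_eq ?_) h0
    apply Finset.sum_eq_zero
    intro j _
    by_cases hj : β.blk j = L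
    · simp only [hj, if_true]; rw [if_neg h]
    · simp [hj]


/-- off-diagonal kernel -/
def Blk.M0 (K : ι → ι → ℝ) (i j : ι) : ℝ := if β.blk i = β.blk j then 0 else x i * x j * K i j

/-- mask of the nonzero blocks -/
def Blk.t (i : ι) : Bool := decide (β.blk i ≠ 0)

/-- off-diagonal kernel without the first block -/
def Blk.M2 (K : ι → ι → ℝ) (i j : ι) : ℝ := msk (β.t i) * msk (β.t j) * β.M0 K i j


lemma Blk.frob (hK : ∀ i j, K i j = K j i) (hR : Rip K k δ) (hs : 2 * s ≤ k)
    (hx : ∑ i, x i ^ 2 = 1) (hs0 : 0 < s) : ∑ i, ∑ j, (β.M2 K i j) ^ 2 ≤ δ ^ 2 / s := by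
  have hA : ∑ L ∈ Finset.range β.D, β.a L ^ 2 ≤ 1 / s := by
    rw [le_div_iff₀ (by exact_mod_cast hs0), mul_comm]; exact hx ▸ β.sum
  have h : ∀ i, ∑ j, (β.M2 K i j) ^ 2 ≤ δ ^ 2 * (∑ L ∈ Finset.range β.D, β.a L ^ 2) * x i ^ 2 := by
    intro i
    have := β.rowsum hK hR hs (β.blk i) (Pi.single i (x i)) (by
      intro i' hi'
      apply Pi.single_eq_of_ne
      rintro rfl; exact hi' rfl)
    have e : ∑ i', (Pi.single i (x i) : ι → ℝ) i' ^ 2 = x i ^ 2 := by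
      rw [Finset.sum_eq_single i]
      · simp
      · intro b _ hb; rw [Pi.single_eq_of_ne hb]; simp
      · simp
    rw [e] at this
    refine le_trans (Finset.sum_le_sum (fun j _ => ?_)) this
    have e2 : ∑ i', K i' j * (Pi.single i (x i) : ι → ℝ) i' = K i j * x i := by
      rw [Finset.sum_eq_single i]
      · simp
      · intro b _ hb; rw [Pi.single_eq_of_ne hb]; simp
      · simp
    rw [e2]
    by_cases h1 : β.blk j = 0
    · simp [h1, Blk.M2, Blk.t, msk]
    · by_cases h2 : β.blk i = β.blk j
      · simp [h2, Blk.M2, Blk.M0]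
      · have hc : β.blk j ≠ 0 ∧ β.blk j ≠ β.blk i := ⟨h1, fun h => h2 h.symm⟩
        rw [if_pos hc]
        by_cases h3 : β.blk i = 0
        · have : β.M2 K i j = 0 := by simp [h3, Blk.M2, Blk.t, msk]
          rw [this, zero_pow two_ne_zero]; positivity
        · have : β.M2 K i j = x j * (K i j * x i) := by
            simp [h1, h2, h3, Blk.M2, Blk.M0, Blk.t, msk]; ring
          rw [this]
  refine (Finset.sum_le_sum (fun i _ => h i)).trans ?_
  rw [← Finset.mul_sum, hx, mul_one, div_eq_mul_one_div]
  exact mul_le_mul_of_nonneg_left hA (sq_nonneg _)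

lemma Blk.first (hK : ∀ i j, K i j = K j i) (hR : Rip K k δ) (hs : 2 * s ≤ k)
    (hx : ∑ i, x i ^ 2 = 1) (hs0 : 0 < s) (ω : ι → Bool) :
    ∑ i, (∑ j, msk (β.t i) * msk (!β.t j) * β.M0 K i j * sg (ω j)) ^ 2 ≤ δ ^ 2 / s := by
  have hA : ∑ L ∈ Finset.range β.D, β.a L ^ 2 ≤ 1 / s := by
    rw [le_div_iff₀ (by exact_mod_cast hs0), mul_comm]; exact hx ▸ β.sum
  have := β.rowsum hK hR hs 0 (β.res 0 (fun i => x i * sg (ω i))) (by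
    intro i hi; simp [Blk.res, hi])
  have hU : ∑ i, β.res 0 (fun i => x i * sg (ω i)) i ^ 2 ≤ 1 := by
    rw [← hx]
    refine Finset.sum_le_sum (fun i _ => ?_)
    unfold Blk.res
    split_ifs
    · rw [mul_pow, sq (sg _), sg_sq, mul_one]
    · simp; positivity
  have hA0 : 0 ≤ ∑ L ∈ Finset.range β.D, β.a L ^ 2 := Finset.sum_nonneg (fun _ _ => sq_nonneg _)
  refine le_trans (le_trans (Finset.sum_le_sum (fun j _ => ?_)) this) ?_
  · by_cases h : β.blk j = 0
    · simp [Blk.t, msk, h]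
    · rw [if_pos ⟨h, h⟩]
      apply le_of_eq
      congr 1
      rw [Finset.mul_sum]
      refine Finset.sum_congr rfl (fun i _ => ?_)
      by_cases h' : β.blk i = 0
      · simp [Blk.t, msk, h, h', Blk.M0, Blk.res]; rw [hK i j]; ring
      · simp [Blk.t, msk, h', Blk.res]
  · calc _ ≤ δ ^ 2 * (1 / s) * 1 := by gcongr
      _ = _ := by ring

lemma Blk.op (hK : ∀ i j, K i j = K j i) (hR : Rip K k δ) (hs : 2 * s ≤ k)
    (hδ : 0 ≤ δ) (hx : ∑ i, x i ^ 2 = 1) (hs0 : 0 < s) (u w : ι → ℝ) :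
    (∑ i, ∑ j, u i * β.M2 K i j * w j) ^ 2 ≤
      (δ / s) ^ 2 * (∑ i, u i ^ 2) * ∑ i, w i ^ 2 := by
  have hA : ∑ L ∈ Finset.range β.D, β.a L ^ 2 ≤ 1 / s := by
    rw [le_div_iff₀ (by exact_mod_cast hs0), mul_comm]; exact hx ▸ β.sum
  have hA0 : 0 ≤ ∑ L ∈ Finset.range β.D, β.a L ^ 2 := Finset.sum_nonneg (fun _ _ => sq_nonneg _)
  set nn : (ι → ℝ) → ℕ → ℝ := fun v L => √(∑ i, (β.res L v i) ^ 2) with hnn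
  have hn0 : ∀ v L, 0 ≤ nn v L := fun v L => Real.sqrt_nonneg _
  have hns : ∀ v L, nn v L ^ 2 = ∑ i, (β.res L v i) ^ 2 := fun v L =>
    Real.sq_sqrt (Finset.sum_nonneg (fun _ _ => sq_nonneg _))
  have cs : ∀ v, (∑ L ∈ Finset.range β.D, β.a L * nn v L) ^ 2 ≤ (1 / s) * ∑ i, v i ^ 2 := by
    intro v
    refine (Finset.sum_mul_sq_le_sq_mul_sq _ _ _).trans ?_
    have : ∑ L ∈ Finset.range β.D, nn v L ^ 2 = ∑ i, v i ^ 2 := by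
      rw [β.fib]
      refine Finset.sum_congr rfl (fun L _ => ?_)
      rw [hns, β.res_sq]
    rw [this]
    exact mul_le_mul_of_nonneg_right hA (Finset.sum_nonneg (fun _ _ => sq_nonneg _))
  have e1 : ∑ i, ∑ j, u i * β.M2 K i j * w j =
      ∑ J ∈ Finset.range β.D, ∑ L ∈ Finset.range β.D, (if J ≠ 0 ∧ L ≠ 0 ∧ J ≠ L then
        bf K (β.res J (fun i => x i * u i)) (β.res L (fun i => x i * w i)) else 0) := by
    rw [β.fib]
    refine Finset.sum_congr rfl (fun J _ => ?_)
    have : ∀ i, (if β.blk i = J then ∑ j, u i * β.M2 K i j * w j else 0) =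
        ∑ L ∈ Finset.range β.D, ∑ j, (if β.blk j = L then
          (if β.blk i = J then u i * β.M2 K i j * w j else 0) else 0) := by
      intro i
      rw [← β.fib]
      split_ifs <;> simp
    simp only [this]
    rw [Finset.sum_comm]
    refine Finset.sum_congr rfl (fun L _ => ?_)
    by_cases h : J ≠ 0 ∧ L ≠ 0 ∧ J ≠ L
    · rw [if_pos h]
      unfold bf
      refine Finset.sum_congr rfl (fun i _ => Finset.sum_congr rfl (fun j _ => ?_))
      unfold Blk.res
      by_cases hi : β.blk i = J <;> by_cases hj : β.blk j = L
      · simp [hi, hj, Blk.M2, Blk.M0, Blk.t, msk, h.1, h.2.1, h.2.2]; ring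
      · simp [hj]
      · simp [hi]
      · simp [hi]
    · rw [if_neg h]
      refine Finset.sum_eq_zero (fun i _ => Finset.sum_eq_zero (fun j _ => ?_))
      split_ifs with hj hi
      · have : β.M2 K i j = 0 := by
          unfold Blk.M2 Blk.M0 Blk.t msk
          rw [hi, hj]
          by_cases h1 : J = 0
          · simp [h1]
          · by_cases h2 : L = 0
            · simp [h2]
            · have : J = L := by tauto
              simp [this]
        rw [this]; ring
      · rfl
      · rfl
  have hb : ∀ J L, |if J ≠ 0 ∧ L ≠ 0 ∧ J ≠ L then
        bf K (β.res J (fun i => x i * u i)) (β.res L (fun i => x i * w i)) else 0| ≤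
        δ * ((β.a J * nn u J) * (β.a L * nn w L)) := by
    intro J L
    have h0 : 0 ≤ δ * ((β.a J * nn u J) * (β.a L * nn w L)) := by
      have := β.nonneg J; have := β.nonneg L; have := hn0 u J; have := hn0 w L
      positivity
    split_ifs with h
    · apply abs_le_of_sq_le_sq _ h0
      refine (rip_disjoint hK hR hs _ _ (β.card_supp J _ (fun i hi => by simp [Blk.res, hi]))
        (β.card_supp L _ (fun i hi => by simp [Blk.res, hi])) (by
          intro i
          by_cases hi : β.blk i = J
          · right; have : ¬ β.blk i = L := by rw [hi]; exact h.2.2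
            simp [Blk.res, this]
          · left; simp [Blk.res, hi])).trans ?_
      have h1 := β.res_mul_sq J h.1 u
      have h2 := β.res_mul_sq L h.2.1 w
      rw [← hns u] at h1
      rw [← hns w] at h2
      calc _ ≤ δ ^ 2 * (β.a J ^ 2 * nn u J ^ 2) * (β.a L ^ 2 * nn w L ^ 2) := by
            gcongr
        _ = _ := by ring
    · simpa using h0
  have h3 : |∑ i, ∑ j, u i * β.M2 K i j * w j| ≤ δ *
      ((∑ L ∈ Finset.range β.D, β.a L * nn u L) * (∑ L ∈ Finset.range β.D, β.a L * nn w L)) := by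
    rw [e1, Finset.sum_mul_sum, Finset.mul_sum]
    refine (Finset.abs_sum_le_sum_abs _ _).trans (Finset.sum_le_sum (fun J _ => ?_))
    rw [Finset.mul_sum]
    exact (Finset.abs_sum_le_sum_abs _ _).trans (Finset.sum_le_sum (fun L _ => hb J L))
  rw [← sq_abs]
  refine (pow_le_pow_left₀ (abs_nonneg _) h3 2).trans ?_
  rw [mul_pow, mul_pow]
  calc _ ≤ δ ^ 2 * ((1 / s * ∑ i, u i ^ 2) * (1 / s * ∑ i, w i ^ 2)) := by
        gcongr
        · exact cs u
        · exact cs w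
    _ = _ := by ring

lemma Blk.mgf2 (hK : ∀ i j, K i j = K j i) (hR : Rip K k δ) (hs : 2 * s ≤ k)
    (hδ : 0 < δ) (hx : ∑ i, x i ^ 2 = 1) (hs0 : 0 < s) (l : ℝ)
    (hl : l ^ 2 = (s / (12 * δ)) ^ 2) :
    Ex (fun ω : ι → Bool => exp (l * ∑ i, ∑ j, β.M2 K i j * sg (ω i) * sg (ω j))) ≤
      exp (s / 9) := by
  have hsr : (0:ℝ) < s := by exact_mod_cast hs0
  obtain ⟨t, ht⟩ := decouple (fun i j => l * β.M2 K i j) (fun i => by simp [Blk.M2, Blk.M0])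
  have e0 : ∀ ω : ι → Bool, l * ∑ i, ∑ j, β.M2 K i j * sg (ω i) * sg (ω j) =
      ∑ i, ∑ j, l * β.M2 K i j * sg (ω i) * sg (ω j) := by
    intro ω
    simp only [Finset.mul_sum]
    exact Finset.sum_congr rfl (fun i _ => Finset.sum_congr rfl (fun j _ => by ring))
  simp only [e0]
  refine ht.trans ?_
  have hm : ∀ b : Bool, msk b ^ 2 ≤ 1 := by intro b; cases b <;> simp [msk]
  have hmgf := mgf_sq (fun i j => msk (t i) * msk (!t j) * β.M2 K i j) (8 * l ^ 2) ((δ / s) ^ 2)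
    (δ ^ 2 / s) (by positivity) (by
      rw [hl]; field_simp; norm_num) (by
      intro y
      set w : ι → ℝ := fun j => ∑ r, msk (t r) * msk (!t j) * β.M2 K r j * y r with hw
      set S := ∑ j, w j ^ 2 with hS
      have hop := β.op hK hR hs hδ.le hx hs0 (fun i => msk (t i) * y i) (fun j => msk (!t j) * w j)
      have e : ∑ i, ∑ j, (msk (t i) * y i) * β.M2 K i j * (msk (!t j) * w j) = S := by
        rw [Finset.sum_comm, hS]
        refine Finset.sum_congr rfl (fun j _ => ?_)
        rw [sq]
        nth_rewrite 2 [hw]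
        simp only [Finset.sum_mul]
        exact Finset.sum_congr rfl (fun i _ => by ring)
      rw [e] at hop
      have b1 : ∑ i, (msk (t i) * y i) ^ 2 ≤ ∑ i, y i ^ 2 := by
        refine Finset.sum_le_sum (fun i _ => ?_)
        rw [mul_pow]; exact mul_le_of_le_one_left (sq_nonneg _) (hm _)
      have b2 : ∑ i, (msk (!t i) * w i) ^ 2 ≤ S := by
        refine Finset.sum_le_sum (fun i _ => ?_)
        rw [mul_pow]; exact mul_le_of_le_one_left (sq_nonneg _) (hm _)
      have hS0 : 0 ≤ S := Finset.sum_nonneg (fun _ _ => sq_nonneg _)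
      have hY0 : 0 ≤ ∑ i, y i ^ 2 := Finset.sum_nonneg (fun _ _ => sq_nonneg _)
      have h4 : S ^ 2 ≤ ((δ / s) ^ 2 * ∑ i, y i ^ 2) * S := by
        refine hop.trans ?_
        gcongr
      change S ≤ _
      by_contra hc
      push Not at hc
      have : 0 < S := lt_of_le_of_lt (by positivity) hc
      nlinarith) (by
      refine le_trans (Finset.sum_le_sum (fun i _ => Finset.sum_le_sum (fun j _ => ?_)))
        (β.frob hK hR hs hx hs0)
      rw [mul_pow, mul_pow]
      refine mul_le_of_le_one_left (sq_nonneg _) ?_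
      exact mul_le_one₀ (hm _) (sq_nonneg _) (hm _))
  refine le_trans (le_of_eq ?_) (hmgf.trans (le_of_eq ?_))
  · congr 1; funext ω; congr 1
    rw [mul_assoc]
    congr 1
    rw [Finset.mul_sum]
    refine Finset.sum_congr rfl (fun i _ => ?_)
    rw [← mul_pow, Finset.mul_sum]
    congr 1
    exact Finset.sum_congr rfl (fun j _ => by ring)
  · congr 1
    rw [hl]; field_simp; norm_num

lemma Blk.mgf1 (hK : ∀ i j, K i j = K j i) (hR : Rip K k δ) (hs : 2 * s ≤ k)
    (hδ : 0 < δ) (hx : ∑ i, x i ^ 2 = 1) (hs0 : 0 < s) (l : ℝ)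
    (hl : l ^ 2 = (s / (4 * δ)) ^ 2) :
    Ex (fun ω : ι → Bool => exp (l * (2 * ∑ i, ∑ j, msk (β.t i) * msk (!β.t j) * β.M0 K i j
      * sg (ω i) * sg (ω j)))) ≤ exp (s / 8) := by
  have hsr : (0:ℝ) < s := by exact_mod_cast hs0
  have h := cond_hoeffding (fun i j => 2 * l * β.M0 K i j) β.t
  refine le_trans (le_of_eq ?_) (h.trans ?_)
  · congr 1; funext ω; congr 1
    simp only [Finset.mul_sum]
    exact Finset.sum_congr rfl (fun i _ => Finset.sum_congr rfl (fun j _ => by ring))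
  · rw [← Ex_const (ι := ι) (exp ((s:ℝ) / 8))]
    apply Ex_mono
    intro ω
    apply exp_le_exp.mpr
    have e : ∑ i, (∑ j, msk (β.t i) * msk (!β.t j) * (2 * l * β.M0 K i j) * sg (ω j)) ^ 2 =
        4 * l ^ 2 * ∑ i, (∑ j, msk (β.t i) * msk (!β.t j) * β.M0 K i j * sg (ω j)) ^ 2 := by
      rw [Finset.mul_sum]
      refine Finset.sum_congr rfl (fun i _ => ?_)
      have : 4 * l ^ 2 = (2 * l) ^ 2 := by ring
      rw [this, ← mul_pow, Finset.mul_sum]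
      congr 1
      exact Finset.sum_congr rfl (fun j _ => by ring)
    rw [e]
    have h2 := β.first hK hR hs hx hs0 ω
    have h3 : 4 * l ^ 2 * (∑ i, (∑ j, msk (β.t i) * msk (!β.t j) * β.M0 K i j * sg (ω j)) ^ 2) / 2
       ≤ 4 * l ^ 2 * (δ ^ 2 / s) / 2 := by gcongr
    refine h3.trans (le_of_eq ?_)
    rw [hl]; field_simp; norm_num

lemma Blk.diag (hK : ∀ i j, K i j = K j i) (hR : Rip K k δ) (hs : 2 * s ≤ k)
    (hx : ∑ i, x i ^ 2 = 1) (ω : ι → Bool) :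
    |∑ i, ∑ j, (if β.blk i = β.blk j then x i * x j * K i j * sg (ω i) * sg (ω j) else 0) - 1| ≤ δ := by
  set z : ι → ℝ := fun i => x i * sg (ω i) with hz
  have e1 : ∑ i, ∑ j, (if β.blk i = β.blk j then x i * x j * K i j * sg (ω i) * sg (ω j) else 0) =
      ∑ L ∈ Finset.range β.D, bf K (β.res L z) (β.res L z) := by
    rw [β.fib]
    refine Finset.sum_congr rfl (fun L _ => ?_)
    unfold bf
    refine Finset.sum_congr rfl (fun i _ => ?_)
    by_cases hi : β.blk i = L
    · rw [if_pos hi]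
      refine Finset.sum_congr rfl (fun j _ => ?_)
      unfold Blk.res
      by_cases hj : β.blk j = L
      · simp [hi, hj, hz]; ring
      · have : ¬ L = β.blk j := fun h => hj h.symm
        simp [hi, hj, this]
    · rw [if_neg hi]; symm
      apply Finset.sum_eq_zero
      intro j _
      simp [Blk.res, hi]
  have e2 : ∑ L ∈ Finset.range β.D, ∑ i, (β.res L z i) ^ 2 = 1 := by
    rw [← hx]
    have : ∀ i, x i ^ 2 = z i ^ 2 := by
      intro i; simp only [hz]; rw [mul_pow, sq (sg _), sg_sq, mul_one]
    simp only [this]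
    rw [β.fib]
    exact Finset.sum_congr rfl (fun L _ => β.res_sq L z)
  rw [e1]
  calc _ = |∑ L ∈ Finset.range β.D, (bf K (β.res L z) (β.res L z) - ∑ i, (β.res L z i) ^ 2)| := by
        rw [Finset.sum_sub_distrib, e2]
    _ ≤ ∑ L ∈ Finset.range β.D, δ * ∑ i, (β.res L z i) ^ 2 := by
        refine (Finset.abs_sum_le_sum_abs _ _).trans (Finset.sum_le_sum (fun L _ => ?_))
        apply hR
        have := β.card_supp L (β.res L z) (fun i hi => by simp [Blk.res, hi])
        omega
    _ = δ := by rw [← Finset.mul_sum, e2, mul_one]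

lemma Blk.split (hK : ∀ i j, K i j = K j i) (ω : ι → Bool) :
    bf K (fun i => x i * sg (ω i)) (fun i => x i * sg (ω i)) =
    ∑ i, ∑ j, (if β.blk i = β.blk j then x i * x j * K i j * sg (ω i) * sg (ω j) else 0)
    + 2 * ∑ i, ∑ j, msk (β.t i) * msk (!β.t j) * β.M0 K i j * sg (ω i) * sg (ω j)
    + ∑ i, ∑ j, β.M2 K i j * sg (ω i) * sg (ω j) := by
  have h : ∑ i, ∑ j, msk (β.t i) * msk (!β.t j) * β.M0 K i j * sg (ω i) * sg (ω j) =
     ∑ i, ∑ j, msk (β.t j) * msk (!β.t i) * β.M0 K i j * sg (ω i) * sg (ω j) := by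
    rw [Finset.sum_comm]
    refine Finset.sum_congr rfl (fun i _ => Finset.sum_congr rfl (fun j _ => ?_))
    have : β.M0 K j i = β.M0 K i j := by
      unfold Blk.M0
      rw [hK i j]
      by_cases h : β.blk i = β.blk j
      · simp [h]
      · have : ¬ β.blk j = β.blk i := fun h' => h h'.symm
        rw [if_neg h, if_neg this]; ring
    rw [this]; ring
  rw [two_mul]
  nth_rewrite 2 [h]
  unfold bf
  simp only [← Finset.sum_add_distrib]
  refine Finset.sum_congr rfl (fun i _ => Finset.sum_congr rfl (fun j _ => ?_))
  by_cases h1 : β.blk i = β.blk j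
  · simp [h1, Blk.M0, Blk.M2]; ring
  · by_cases h2 : β.blk i = 0 <;> by_cases h3 : β.blk j = 0
    · exact absurd (h2.trans h3.symm) h1
    · have : ¬ 0 = β.blk j := fun h => h3 h.symm
      simp [h2, h3, this, Blk.M0, Blk.M2, Blk.t, msk]; ring
    · simp [h2, h3, Blk.M0, Blk.M2, Blk.t, msk]; ring
    · simp [h1, h2, h3, Blk.M0, Blk.M2, Blk.t, msk]; ring

end Blocks

lemma chernoff {ι : Type*} [Fintype ι] [DecidableEq ι] (g : (ι → Bool) → ℝ) (A T : ℝ)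
    (h : Ex (fun ω => exp (g ω)) ≤ exp A) :
    ((Finset.univ.filter fun ω => T ≤ g ω).card : ℝ) ≤ exp (A - T) * 2 ^ (Fintype.card ι) := by
  unfold Ex at h
  rw [div_le_iff₀ (by positivity)] at h
  have h1 : ((Finset.univ.filter fun ω => T ≤ g ω).card : ℝ) * exp T ≤ ∑ ω, exp (g ω) := by
    rw [← nsmul_eq_mul]
    refine (Finset.card_nsmul_le_sum _ (fun ω => exp (g ω)) _ ?_).trans ?_
    · intro ω hω
      exact exp_le_exp.mpr (Finset.mem_filter.mp hω).2
    · exact Finset.sum_le_sum_of_subset_of_nonneg (Finset.subset_univ _)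
        (fun _ _ _ => (exp_pos _).le)
  rw [exp_sub, div_mul_eq_mul_div, le_div_iff₀ (exp_pos _)]
  exact h1.trans h

lemma Blk.tail {ι : Type*} [Fintype ι] [DecidableEq ι] {x : ι → ℝ} {s : ℕ} (β : Blk x s)
    {K : ι → ι → ℝ} (hK : ∀ i j, K i j = K j i) {k : ℕ} {δ : ℝ}
    (hR : Rip K k δ) (hs : 2 * s ≤ k) (hδ : 0 < δ) (hx : ∑ i, x i ^ 2 = 1) (hs0 : 0 < s) :
    ((Finset.univ.filter fun ω : ι → Bool =>
      4 * δ < |bf K (fun i => x i * sg (ω i)) (fun i => x i * sg (ω i)) - 1|).card : ℝ) ≤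
      4 * exp (-(s : ℝ) / 18) * 2 ^ (Fintype.card ι) := by
  have hsr : (0:ℝ) < s := by exact_mod_cast hs0
  set R1 : (ι → Bool) → ℝ := fun ω => 2 * ∑ i, ∑ j, msk (β.t i) * msk (!β.t j) * β.M0 K i j
      * sg (ω i) * sg (ω j) with hR1
  set R2 : (ι → Bool) → ℝ := fun ω => ∑ i, ∑ j, β.M2 K i j * sg (ω i) * sg (ω j) with hR2
  set l1 : ℝ := s / (4 * δ) with hl1
  set l2 : ℝ := s / (12 * δ) with hl2
  have c1 := chernoff _ _ (s / 4 : ℝ) (β.mgf1 hK hR hs hδ hx hs0 l1 rfl)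
  have c2 := chernoff _ _ (s / 4 : ℝ) (β.mgf1 hK hR hs hδ hx hs0 (-l1) (by rw [neg_sq]))
  have c3 := chernoff _ _ (s / 6 : ℝ) (β.mgf2 hK hR hs hδ hx hs0 l2 rfl)
  have c4 := chernoff _ _ (s / 6 : ℝ) (β.mgf2 hK hR hs hδ hx hs0 (-l2) (by rw [neg_sq]))
  have b1 : exp ((s:ℝ) / 8 - s / 4) ≤ exp (-(s:ℝ) / 18) := exp_le_exp.mpr (by linarith)
  have b2 : exp ((s:ℝ) / 9 - s / 6) ≤ exp (-(s:ℝ) / 18) := exp_le_exp.mpr (by linarith)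
  have hsub : (Finset.univ.filter fun ω : ι → Bool =>
      4 * δ < |bf K (fun i => x i * sg (ω i)) (fun i => x i * sg (ω i)) - 1|) ⊆
      ((Finset.univ.filter fun ω => (s / 4 : ℝ) ≤ l1 * R1 ω) ∪
       (Finset.univ.filter fun ω => (s / 4 : ℝ) ≤ (-l1) * R1 ω)) ∪
      ((Finset.univ.filter fun ω => (s / 6 : ℝ) ≤ l2 * R2 ω) ∪
       (Finset.univ.filter fun ω => (s / 6 : ℝ) ≤ (-l2) * R2 ω)) := by
    intro ω hω
    simp only [Finset.mem_union, Finset.mem_filter, Finset.mem_univ, true_and] at hω ⊢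
    by_contra hc
    push Not at hc
    obtain ⟨⟨h1, h2⟩, h3, h4⟩ := hc
    have hl1p : 0 < l1 := by positivity
    have hl2p : 0 < l2 := by positivity
    have e1 : (s:ℝ) / 4 = l1 * δ := by rw [hl1]; field_simp
    have e2 : (s:ℝ) / 6 = l2 * (2 * δ) := by rw [hl2]; field_simp; norm_num
    rw [e1] at h1 h2
    rw [e2] at h3 h4
    have h1' : R1 ω < δ := lt_of_mul_lt_mul_left h1 hl1p.le
    have h2' : - R1 ω < δ := lt_of_mul_lt_mul_left (by linarith) hl1p.le
    have h3' : R2 ω < 2 * δ := lt_of_mul_lt_mul_left h3 hl2p.le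
    have h4' : - R2 ω < 2 * δ := lt_of_mul_lt_mul_left (by linarith) hl2p.le
    have hd := abs_le.mp (β.diag hK hR hs hx ω)
    rw [β.split hK ω] at hω
    have e5 : R1 ω = 2 * ∑ i, ∑ j, msk (β.t i) * msk (!β.t j) * β.M0 K i j
      * sg (ω i) * sg (ω j) := rfl
    have e6 : R2 ω = ∑ i, ∑ j, β.M2 K i j * sg (ω i) * sg (ω j) := rfl
    rw [← e5, ← e6] at hω
    rcases lt_abs.mp hω with h | h <;> linarith [hd.1, hd.2]
  have hcard := (Finset.card_le_card hsub).trans ((Finset.card_union_le _ _).trans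
    (add_le_add (Finset.card_union_le _ _) (Finset.card_union_le _ _)))
  have hcard' := (Nat.cast_le (α := ℝ)).mpr hcard
  push_cast at hcard'
  have hp : (0:ℝ) < 2 ^ (Fintype.card ι) := by positivity
  have b1' := mul_le_mul_of_nonneg_right b1 hp.le
  have b2' := mul_le_mul_of_nonneg_right b2 hp.le
  linarith

lemma exists_blk {d : ℕ} (x : Fin d → ℝ) {s : ℕ} (hs : 0 < s) : Nonempty (Blk x s) := by
  set σ := Tuple.sort (fun i => -|x i|) with hσ
  have hmono : Monotone ((fun i => -|x i|) ∘ σ) := Tuple.monotone_sort _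
  set y : ℕ → ℝ := fun j => if h : j < d then |x (σ ⟨j, h⟩)| else 0 with hy
  have hy0 : ∀ j, 0 ≤ y j := by intro j; simp only [hy]; split_ifs <;> simp
  have hanti : ∀ i j, i ≤ j → y j ≤ y i := by
    intro i j hij
    simp only [hy]
    by_cases hj : j < d
    · have hi : i < d := lt_of_le_of_lt hij hj
      rw [dif_pos hj, dif_pos hi]
      have := hmono (show (⟨i, hi⟩ : Fin d) ≤ ⟨j, hj⟩ from hij)
      simp only [Function.comp] at this
      linarith
    · rw [dif_neg hj]; exact hy0 i
  have hyσ : ∀ i, y (σ.symm i).val = |x i| := by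
    intro i; simp [hy]
  have hsum : ∀ n : ℕ, s * ∑ L ∈ Finset.range (n + 1), (if L = 0 then 0 else y (L * s)) ^ 2 ≤
      ∑ j ∈ Finset.range (n * s), y j ^ 2 := by
    intro n
    induction n with
    | zero => simp
    | succ n ih =>
      rw [Finset.sum_range_succ _ (n + 1), mul_add,
        show Finset.range ((n + 1) * s) = Finset.range (n * s + s) by rw [Nat.succ_mul],
        Finset.sum_range_add _ (n * s) s]
      refine add_le_add ih ?_
      rw [if_neg (by omega)]
      have := Finset.card_nsmul_le_sum (Finset.range s) (fun j => y (n * s + j) ^ 2)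
        (y ((n + 1) * s) ^ 2) (by
          intro j hj
          have := Finset.mem_range.mp hj
          exact pow_le_pow_left₀ (hy0 _) (hanti _ _ (by rw [Nat.succ_mul]; omega)) 2)
      rw [Finset.card_range, nsmul_eq_mul] at this
      exact this
  have htot : ∑ j ∈ Finset.range (d * s), y j ^ 2 = ∑ i, x i ^ 2 := by
    have h1 : ∑ j ∈ Finset.range d, y j ^ 2 = ∑ j ∈ Finset.range (d * s), y j ^ 2 := by
      apply Finset.sum_subset
      · intro j hj
        rw [Finset.mem_range] at hj ⊢
        nlinarith
      · intro j _ hj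
        rw [Finset.mem_range] at hj
        simp [hy, hj]
    rw [← h1, Finset.sum_range, ← Equiv.sum_comp σ (fun i => x i ^ 2)]
    refine Finset.sum_congr rfl (fun i _ => ?_)
    simp [hy]
  refine ⟨{ blk := fun i => (σ.symm i).val / s, D := d + 1,
            a := fun L => if L = 0 then 0 else y (L * s), lt := ?_, card := ?_, le := ?_,
            nonneg := ?_, sum := ?_ }⟩
  · intro i
    have := Nat.div_le_self (σ.symm i).val s
    have := (σ.symm i).isLt
    omega
  · intro L
    have : (Finset.univ.filter fun i => (σ.symm i).val / s = L).card ≤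
        (Finset.Ico (L * s) (L * s + s)).card := by
      apply Finset.card_le_card_of_injOn (fun i => (σ.symm i).val)
      · intro i hi
        simp only [Finset.coe_filter, Finset.mem_univ, true_and, Set.mem_ofPred_eq] at hi
        simp only [Finset.coe_Ico, Set.mem_Ico]
        rw [← hi]
        refine ⟨Nat.div_mul_le_self _ _, ?_⟩
        have := Nat.lt_div_mul_add (a := (σ.symm i).val) hs
        exact this
      · intro i _ j _ hij
        exact σ.symm.injective (Fin.ext hij)
    simpa using this
  · intro i hi
    rw [if_neg hi, ← hyσ]
    exact hanti _ _ (Nat.div_mul_le_self _ _)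
  · intro L; split_ifs
    · exact le_refl _
    · exact hy0 _
  · rw [← htot]; exact hsum d

/-- Gram matrix -/
def gram {m d : ℕ} (A : Matrix (Fin m) (Fin d) ℝ) (i j : Fin d) : ℝ := ∑ r, A r i * A r j

lemma l2norm_sq {d : ℕ} (x : Fin d → ℝ) : l2norm x ^ 2 = ∑ i, x i ^ 2 :=
  Real.sq_sqrt (Finset.sum_nonneg (fun _ _ => sq_nonneg _))

lemma bf_gram {m d : ℕ} (A : Matrix (Fin m) (Fin d) ℝ) (u : Fin d → ℝ) :
    bf (gram A) u u = l2norm (A.mulVec u) ^ 2 := by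
  rw [l2norm_sq]
  unfold bf gram
  have : ∀ r, (A.mulVec u r) ^ 2 = ∑ i, ∑ j, A r i * A r j * u i * u j := by
    intro r
    unfold Matrix.mulVec dotProduct
    rw [sq, Finset.sum_mul_sum]
    exact Finset.sum_congr rfl (fun i _ => Finset.sum_congr rfl (fun j _ => by ring))
  simp only [this]
  symm
  rw [Finset.sum_comm]
  refine Finset.sum_congr rfl (fun i _ => ?_)
  rw [Finset.sum_comm]
  refine Finset.sum_congr rfl (fun j _ => ?_)
  rw [Finset.sum_mul, Finset.sum_mul]

lemma bf_smul {ι : Type*} [Fintype ι] (K : ι → ι → ℝ) (c : ℝ) (u : ι → ℝ) :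
    bf K (fun i => c * u i) (fun i => c * u i) = c ^ 2 * bf K u u := by
  unfold bf
  simp only [Finset.mul_sum]
  exact Finset.sum_congr rfl (fun i _ => Finset.sum_congr rfl (fun j _ => by ring))

lemma rip_of_const {m d : ℕ} (A : Matrix (Fin m) (Fin d) ℝ) (k : ℕ) (δ : ℝ)
    (h : ripConst A k ≤ δ) : Rip (gram A) k δ := by
  have hbdd : BddAbove {r : ℝ | ∃ x : Fin d → ℝ, l2norm x = 1 ∧
    (Finset.univ.filter fun i => x i ≠ 0).card ≤ k ∧ r = |l2norm (A.mulVec x) ^ 2 - 1|} := by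
    refine ⟨(∑ r, ∑ i, A r i ^ 2) + 1, ?_⟩
    rintro r ⟨x, hx, -, rfl⟩
    have h1 : l2norm (A.mulVec x) ^ 2 ≤ ∑ r, ∑ i, A r i ^ 2 := by
      rw [l2norm_sq]
      refine Finset.sum_le_sum (fun r _ => ?_)
      have := Finset.sum_mul_sq_le_sq_mul_sq Finset.univ (fun i => A r i) x
      rw [← l2norm_sq x, hx] at this
      simpa [Matrix.mulVec, dotProduct] using this
    have h2 : 0 ≤ l2norm (A.mulVec x) ^ 2 := sq_nonneg _
    rw [abs_le]
    constructor <;> linarith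
  intro u hu
  set N := ∑ i, u i ^ 2 with hN
  have hN0 : 0 ≤ N := Finset.sum_nonneg (fun _ _ => sq_nonneg _)
  rcases hN0.eq_or_lt with h0 | hpos
  · have hz : ∀ i, u i = 0 := by
      intro i
      have := (Finset.sum_eq_zero_iff_of_nonneg (fun i _ => sq_nonneg (u i))).mp h0.symm i
        (Finset.mem_univ _)
      exact pow_eq_zero_iff two_ne_zero |>.mp this
    rw [← h0]
    simp [bf, hz]
  · set c := (√N)⁻¹ with hc
    have hc2 : c ^ 2 = N⁻¹ := by rw [hc, inv_pow, Real.sq_sqrt hN0]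
    have hcne : c ≠ 0 := by rw [hc]; exact inv_ne_zero (Real.sqrt_ne_zero'.mpr hpos)
    have hmem := le_csSup hbdd ⟨fun i => c * u i, by
        unfold l2norm
        simp only [mul_pow, ← Finset.mul_sum]
        rw [hc2, ← hN, inv_mul_cancel₀ hpos.ne', Real.sqrt_one], by
        simpa [hcne] using hu, rfl⟩
    have h2 := hmem.trans h
    rw [← bf_gram, bf_smul, hc2] at h2
    have e : bf (gram A) u u - N = N * (N⁻¹ * bf (gram A) u u - 1) := by
      field_simp
    rw [e, abs_mul, abs_of_pos hpos, mul_comm δ]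
    exact mul_le_mul_of_nonneg_left h2 hN0

/-- sign vector -/
def vec {d : ℕ} (ω : Fin d → Bool) : Fin d → ℝ := fun i => sg (ω i)

lemma vec_inj {d : ℕ} : Function.Injective (vec (d := d)) := by
  intro ω ω' h
  funext i
  have := congrFun h i
  simp only [vec] at this
  cases h1 : ω i <;> cases h2 : ω' i <;> simp [sg, h1, h2] at this ⊢ <;> norm_num at this

/-- number of failing sign patterns for a single vector -/
lemma bad_card {m d k s : ℕ} {ε : ℝ} (hε : 0 < ε) (A : Matrix (Fin m) (Fin d) ℝ)
    (hR : Rip (gram A) k (ε / 4)) (hs : 2 * s ≤ k) (hs0 : 0 < s) (x : Fin d → ℝ) :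
    ((Finset.univ.filter fun ω : Fin d → Bool =>
      ¬ ((1 - ε) * l2norm x ^ 2 ≤ l2norm ((A * Matrix.diagonal (vec ω)).mulVec x) ^ 2 ∧
          l2norm ((A * Matrix.diagonal (vec ω)).mulVec x) ^ 2 ≤ (1 + ε) * l2norm x ^ 2)).card : ℝ) ≤
      4 * exp (-(s : ℝ) / 18) * 2 ^ d := by
  have e1 : ∀ ω : Fin d → Bool, l2norm ((A * Matrix.diagonal (vec ω)).mulVec x) ^ 2 =
      bf (gram A) (fun i => x i * sg (ω i)) (fun i => x i * sg (ω i)) := by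
    intro ω
    rw [bf_gram, ← Matrix.mulVec_mulVec]
    congr 3
    funext i
    rw [Matrix.mulVec_diagonal, vec, mul_comm]
  simp only [e1, l2norm_sq]
  set N := ∑ i, x i ^ 2 with hN
  have hN0 : 0 ≤ N := Finset.sum_nonneg (fun _ _ => sq_nonneg _)
  rcases hN0.eq_or_lt with h0 | hpos
  · have hz : ∀ i, x i = 0 := by
      intro i
      have := (Finset.sum_eq_zero_iff_of_nonneg (fun i _ => sq_nonneg (x i))).mp h0.symm i
        (Finset.mem_univ _)
      exact pow_eq_zero_iff two_ne_zero |>.mp this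
    rw [← h0]
    simp [bf, hz]
    positivity
  · set c := (√N)⁻¹ with hc
    have hc2 : c ^ 2 = N⁻¹ := by rw [hc, inv_pow, Real.sq_sqrt hN0]
    obtain ⟨β⟩ := exists_blk (fun i => c * x i) hs0
    have ht := β.tail (K := gram A)
      (fun i j => Finset.sum_congr rfl (fun r _ => mul_comm _ _)) hR hs
      (by positivity) (by
        simp only [mul_pow, ← Finset.mul_sum]
        rw [hc2, ← hN, inv_mul_cancel₀ hpos.ne']) hs0
    rw [Fintype.card_fin] at ht
    refine le_trans ?_ ht
    norm_cast
    apply Finset.card_le_card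
    intro ω hω
    simp only [Finset.mem_filter, Finset.mem_univ, true_and] at hω ⊢
    by_contra hcon
    apply hω
    push Not at hcon
    have e2 : (fun i => c * x i * sg (ω i)) = fun i => c * (x i * sg (ω i)) := by
      funext i; ring
    rw [e2, bf_smul, hc2] at hcon
    set Q := bf (gram A) (fun i => x i * sg (ω i)) (fun i => x i * sg (ω i))
    have h4 := abs_le.mp hcon
    have e3 : Q = N * (N⁻¹ * Q) := by field_simp
    constructor
    · rw [e3, mul_comm]
      exact mul_le_mul_of_nonneg_left (by linarith [h4.1]) hN0
    · rw [e3, mul_comm _ N]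
      exact mul_le_mul_of_nonneg_left (by linarith [h4.2]) hN0

lemma prod_sg {ι : Type*} [Fintype ι] (ω : ι → Bool) : ∏ i, sg (ω i) = 1 ∨ ∏ i, sg (ω i) = -1 := by
  have h : (∏ i, sg (ω i)) * (∏ i, sg (ω i)) = 1 := by
    rw [← Finset.prod_mul_distrib]
    exact Finset.prod_eq_one (fun i _ => sg_sq _)
  exact mul_self_eq_one_iff.mp h

lemma even_card (d : ℕ) :
    (2:ℝ) ^ (d - 1) ≤ ((Finset.univ.filter fun ω : Fin d → Bool => ∏ i, vec ω i = 1).card : ℝ) := by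
  rcases Nat.eq_zero_or_pos d with rfl | hd
  · simp
  · have h1 : ∑ ω : Fin d → Bool, ∏ i, sg (ω i) = 0 := by
      have : ∑ ω : Fin d → Bool, ∏ i, sg (ω i) = ∏ i : Fin d, ∑ b : Bool, sg b := by
        rw [Finset.prod_univ_sum, Fintype.piFinset_univ]
      rw [this]
      apply Finset.prod_eq_zero (Finset.mem_univ ⟨0, hd⟩)
      simp [sg]
    have h2 : ((Finset.univ.filter fun ω : Fin d → Bool => ∏ i, vec ω i = 1).card : ℝ) =
        ∑ ω : Fin d → Bool, (1 + ∏ i, sg (ω i)) / 2 := by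
      rw [Finset.card_filter]
      push_cast
      refine Finset.sum_congr rfl (fun ω _ => ?_)
      have e : ∏ i, vec ω i = ∏ i, sg (ω i) := rfl
      rcases prod_sg ω with h | h
      · rw [if_pos (e.trans h), h]; norm_num
      · rw [if_neg (by rw [e, h]; norm_num), h]; norm_num
    rw [h2, ← Finset.sum_div, Finset.sum_add_distrib, h1, Finset.sum_const, card_om]
    obtain ⟨e, rfl⟩ : ∃ e, d = e + 1 := ⟨d - 1, by omega⟩
    simp [pow_succ]

/-- lower bound for the sign measure by counting -/
lemma sign_lower {d : ℕ} (P : (Fin d → ℝ) → Prop) [DecidablePred fun ω : Fin d → Bool => ¬ P (vec ω)] (η : ℝ)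
    (h : ((Finset.univ.filter fun ω : Fin d → Bool => ¬ P (vec ω)).card : ℝ) ≤ η * 2 ^ (d - 1)) :
    signMeasure d {v | P v} ≥ ENNReal.ofReal (1 - η) := by
  classical
  set S : Set (Fin d → ℝ) := {v : Fin d → ℝ | (∀ i, v i = 1 ∨ v i = -1) ∧ ∏ i, v i = 1} with hS
  have hSf : S.Finite := by
    refine (Set.finite_range (vec (d := d))).subset ?_
    rintro v ⟨hv, -⟩
    refine ⟨fun i => decide (v i = 1), ?_⟩
    funext i
    rcases hv i with h | h <;> simp [vec, sg, h]
    norm_num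
  set G := Finset.univ.filter fun ω : Fin d → Bool => ∏ i, vec ω i = 1 ∧ P (vec ω) with hG
  have hGc : (2:ℝ) ^ (d - 1) * (1 - η) ≤ (G.card : ℝ) := by
    have h1 := even_card d
    have h2 : (Finset.univ.filter fun ω : Fin d → Bool => ∏ i, vec ω i = 1) ⊆
        G ∪ (Finset.univ.filter fun ω : Fin d → Bool => ¬ P (vec ω)) := by
      intro ω hω
      simp only [hG, Finset.mem_union, Finset.mem_filter, Finset.mem_univ, true_and] at hω ⊢
      tauto
    have h3 := (Finset.card_le_card h2).trans (Finset.card_union_le _ _)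
    have h4 : ((Finset.univ.filter fun ω : Fin d → Bool => ∏ i, vec ω i = 1).card : ℝ) ≤
      G.card + (Finset.univ.filter fun ω : Fin d → Bool => ¬ P (vec ω)).card := by exact_mod_cast h3
    linarith
  have hm : ((G.card : ℕ) : ℝ≥0∞) ≤ (Measure.count.restrict S) {v | P v} := by
    rw [Measure.restrict_apply' hSf.measurableSet]
    have h5 : ((G.image vec : Finset (Fin d → ℝ)) : Set (Fin d → ℝ)) ⊆ {v | P v} ∩ S := by
      intro v hv
      rw [Finset.coe_image] at hv
      obtain ⟨ω, hω, rfl⟩ := hv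
      simp only [hG, Finset.coe_filter, Finset.mem_univ, true_and, Set.mem_ofPred_eq] at hω
      refine ⟨hω.2, ?_, hω.1⟩
      intro i
      simp only [vec]
      cases ω i <;> simp [sg]
    refine le_trans (le_of_eq ?_) (measure_mono h5)
    rw [Measure.count_apply_finset, Finset.card_image_of_injective _ vec_inj]
  unfold signMeasure
  rw [Measure.smul_apply, smul_eq_mul, ge_iff_le]
  have h2pos : (0:ℝ) < 2 ^ (d - 1) := by positivity
  have h6 : ENNReal.ofReal (1 - η) ≤ ((2 ^ (d - 1) : ℕ) : ℝ≥0∞)⁻¹ * (G.card : ℝ≥0∞) := by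
    have e1 : ((2 ^ (d - 1) : ℕ) : ℝ≥0∞) = ENNReal.ofReal (2 ^ (d - 1)) := by
      rw [← ENNReal.ofReal_natCast]; push_cast; rfl
    rw [e1, ← ENNReal.ofReal_natCast, ← ENNReal.ofReal_inv_of_pos h2pos,
      ← ENNReal.ofReal_mul (by positivity)]
    apply ENNReal.ofReal_le_ofReal
    rw [inv_mul_eq_div, le_div_iff₀ h2pos]
    linarith
  exact h6.trans (mul_le_mul_right hm _)

/-- **Modified Krahmer–Ward theorem**: a matrix with the restricted isometry property,
randomized by a diagonal matrix of signs which are uniform conditioned on having product one,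
yields a Johnson–Lindenstrauss embedding of any fixed finite point set. -/
theorem rip_to_jl :
    ∃ C : ℝ, 0 < C ∧
      ∀ (η ε : ℝ), 0 < η → 0 < ε → ε < 1 →
      ∀ (d m n : ℕ) (E : Finset (Fin d → ℝ)), E.card = n →
      ∀ k : ℕ, C * Real.log (4 * n / η) ≤ k →
      ∀ δ : ℝ, δ ≤ ε / 4 →
      ∀ Φ : Matrix (Fin m) (Fin d) ℝ, ripConst Φ k ≤ δ →
      signMeasure d {v : Fin d → ℝ | ∀ x ∈ E,
          (1 - ε) * l2norm x ^ 2 ≤ l2norm ((Φ * Matrix.diagonal v).mulVec x) ^ 2 ∧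
          l2norm ((Φ * Matrix.diagonal v).mulVec x) ^ 2 ≤ (1 + ε) * l2norm x ^ 2} ≥
        ENNReal.ofReal (1 - η) := by
  classical
  refine ⟨200, by norm_num, ?_⟩
  intro η ε hη hε hε1 d m n E hE k hk δ hδ Φ hΦ
  rcases le_or_gt 1 η with hη1 | hη1
  · rw [ENNReal.ofReal_of_nonpos (by linarith)]; exact zero_le
  apply sign_lower
  rcases Nat.eq_zero_or_pos n with hn | hn
  · have : E = ∅ := Finset.card_eq_zero.mp (hE.trans hn)
    subst this
    simp
    positivity
  have hn1 : (1:ℝ) ≤ n := by exact_mod_cast hn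
  have hR := rip_of_const Φ k (ε / 4) (hΦ.trans hδ)
  have hq : (4:ℝ) ≤ 4 * n / η := by
    rw [le_div_iff₀ hη]; nlinarith
  have hq0 : (0:ℝ) < 4 * n / η := by linarith
  have hlog : 1 ≤ Real.log (4 * n / η) := by
    rw [Real.le_log_iff_exp_le hq0]
    have := Real.exp_one_lt_d9
    linarith
  have hk3 : (200:ℝ) ≤ k := by linarith
  have hk3' : 200 ≤ k := by exact_mod_cast hk3
  set s := k / 2 with hs
  have hs2 : 2 * s ≤ k := by omega
  have hs0 : 0 < s := by omega
  have hs3 : k ≤ 3 * s := by omega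
  have hs3' : (k:ℝ) ≤ 3 * s := by exact_mod_cast hs3
  have hexp : exp (-(s:ℝ) / 18) ≤ (η / (4 * n)) ^ 2 := by
    have h1 : -(s:ℝ) / 18 ≤ 2 * (- Real.log (4 * n / η)) := by linarith
    refine (exp_le_exp.mpr h1).trans (le_of_eq ?_)
    rw [← Real.log_inv, inv_div]
    have : (2:ℝ) * Real.log (η / (4 * n)) = ((2:ℕ):ℝ) * Real.log (η / (4 * n)) := by norm_num
    rw [this, Real.exp_nat_mul, Real.exp_log (by positivity)]
  set bad : (Fin d → ℝ) → Finset (Fin d → Bool) := fun x => Finset.univ.filter fun ω =>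
      ¬ ((1 - ε) * l2norm x ^ 2 ≤ l2norm ((Φ * Matrix.diagonal (vec ω)).mulVec x) ^ 2 ∧
          l2norm ((Φ * Matrix.diagonal (vec ω)).mulVec x) ^ 2 ≤ (1 + ε) * l2norm x ^ 2) with hbad
  have hsub : (Finset.univ.filter fun ω : Fin d → Bool => ¬ ∀ x ∈ E,
      (1 - ε) * l2norm x ^ 2 ≤ l2norm ((Φ * Matrix.diagonal (vec ω)).mulVec x) ^ 2 ∧
      l2norm ((Φ * Matrix.diagonal (vec ω)).mulVec x) ^ 2 ≤ (1 + ε) * l2norm x ^ 2) ⊆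
      E.biUnion bad := by
    intro ω hω
    rw [Finset.mem_filter] at hω
    obtain ⟨-, hω⟩ := hω
    rw [not_forall] at hω
    obtain ⟨x, hx⟩ := hω
    rw [Classical.not_imp] at hx
    rw [Finset.mem_biUnion]
    exact ⟨x, hx.1, Finset.mem_filter.mpr ⟨Finset.mem_univ _, hx.2⟩⟩
  have hc := (Finset.card_le_card hsub).trans Finset.card_biUnion_le
  have hc' : ((Finset.univ.filter fun ω : Fin d → Bool => ¬ ∀ x ∈ E,
      (1 - ε) * l2norm x ^ 2 ≤ l2norm ((Φ * Matrix.diagonal (vec ω)).mulVec x) ^ 2 ∧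
      l2norm ((Φ * Matrix.diagonal (vec ω)).mulVec x) ^ 2 ≤ (1 + ε) * l2norm x ^ 2).card : ℝ) ≤
      ∑ x ∈ E, ((bad x).card : ℝ) := by exact_mod_cast hc
  have hb : ∑ x ∈ E, ((bad x).card : ℝ) ≤ n * (4 * exp (-(s : ℝ) / 18) * 2 ^ d) := by
    rw [← hE, ← nsmul_eq_mul]
    exact Finset.sum_le_card_nsmul _ _ _ (fun x _ => bad_card hε Φ hR hs2 hs0 x)
  have hpow : (2:ℝ) ^ d ≤ 2 * 2 ^ (d - 1) := by
    rw [← pow_succ']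
    exact pow_le_pow_right₀ (by norm_num) (by omega)
  refine hc'.trans (hb.trans ?_)
  calc (n:ℝ) * (4 * exp (-(s : ℝ) / 18) * 2 ^ d)
      ≤ n * (4 * (η / (4 * n)) ^ 2 * (2 * 2 ^ (d - 1))) := by gcongr
    _ = (η / (2 * n)) * (η * 2 ^ (d - 1)) := by field_simp; norm_num
    _ ≤ 1 * (η * 2 ^ (d - 1)) := by
        gcongr
        rw [div_le_one (by positivity)]; linarith
    _ = η * 2 ^ (d - 1) := one_mul _

end KacJL
end
end

section
/- There is an absolute constant C > 0 (C = 2.25 suffices) such that the following holds. Let d ≥ 25, let x be a random vector taking values in S^{d−1}, let Q_t be an ORA walk of length t on ℝ^d independent of x, let p be a positive integer with p ≤ d, and let t ≥ C p d log d. Then E[S_p(Q_t x)] ≤ 2^{p−2} d^{1−p} / p!. -/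
noncomputable section

open MeasureTheory Real
open scoped ENNReal

namespace KacJL

instance matrixMeasurableSpace {m n : Type*} : MeasurableSpace (Matrix m n ℝ) :=
  inferInstanceAs (MeasurableSpace (m → n → ℝ))

/-- The rotation by angle `θ` in the `(i,j)` coordinate plane of `ℝ^d`. -/
def rotM (d : ℕ) (i j : Fin d) (θ : ℝ) : Matrix (Fin d) (Fin d) ℝ :=
  Matrix.of fun k l =>
    if k = i ∧ l = i then Real.cos θ
    else if k = i ∧ l = j then -Real.sin θ
    else if k = j ∧ l = i then Real.sin θ
    else if k = j ∧ l = j then Real.cos θ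
    else if k = l then 1 else 0

/-- The uniform distribution on pairs of distinct coordinates in `Fin d`. -/
def pairUniform (d : ℕ) : Measure (Fin d × Fin d) :=
  ((d * (d - 1) : ℕ) : ℝ≥0∞)⁻¹ •
    (Measure.count.restrict {p : Fin d × Fin d | p.1 ≠ p.2})

/-- The product `R_{i_T,j_T,π/4} ⋯ R_{i_1,j_1,π/4}` of ORA rotations determined by the
pairs `ω`. -/
def oraMatrix {d T : ℕ} (ω : Fin T → Fin d × Fin d) : Matrix (Fin d) (Fin d) ℝ :=
  ((List.ofFn fun t => rotM d (ω t).1 (ω t).2 (Real.pi / 4)).reverse).prod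

/-- `S_k(x) = (1/(2k)!) ∑ i, x_i^{2k}`. -/
def Sk {d : ℕ} (k : ℕ) (x : Fin d → ℝ) : ℝ :=
  (((2 * k).factorial : ℝ))⁻¹ * ∑ i, x i ^ (2 * k)

/-- coefficients of `(x+y)^a (x-y)^b`. -/
noncomputable def KK (b : ℕ) : ℕ → ℕ → ℝ
  | 0, j => (-1) ^ (b + j) * (b.choose j : ℝ)
  | a + 1, 0 => KK b a 0
  | a + 1, j + 1 => KK b a j + KK b a (j + 1)

theorem KK_zero_of_lt (b a j : ℕ) (h : a + b < j) : KK b a j = 0 := by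
  induction a generalizing j with
  | zero => simp [KK, Nat.choose_eq_zero_of_lt (show b < j by omega)]
  | succ a ih =>
    cases j with
    | zero => omega
    | succ j => simp [KK, ih j (by omega), ih (j+1) (by omega)]

theorem KK_D0 (b j : ℕ) : ((j:ℝ)+1) * KK b 0 (j+1) + ((b:ℝ) - j) * KK b 0 j = 0 := by
  have h := Nat.choose_succ_right_eq b j
  simp only [KK]
  rcases le_or_gt j b with hj | hj
  · have h' : ((b.choose (j+1) : ℕ):ℝ) * (j+1) = b.choose j * ((b:ℝ) - j) := by
      rw [← Nat.cast_sub hj]; exact_mod_cast h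
    rw [← add_assoc, pow_succ]
    linear_combination (-(-1)^(b+j)) * h'
  · simp [Nat.choose_eq_zero_of_lt hj, Nat.choose_eq_zero_of_lt (show b < j+1 by omega)]

theorem KK_s0 (b a : ℕ) : KK b (a+1) 0 = KK b a 0 := by rw [KK]

theorem KK_ss (b a j : ℕ) : KK b (a+1) (j+1) = KK b a j + KK b a (j+1) := by rw [KK]

theorem KK_D (b a j : ℕ) : ((j:ℝ)+1) * KK b (a+1) (j+1) + ((a:ℝ) + 1 + b - j) * KK b (a+1) j
    = 2 * ((a:ℝ)+1) * KK b a j := by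
  induction a generalizing j with
  | zero =>
    cases j with
    | zero =>
      have := KK_D0 b 0
      rw [KK_ss, KK_s0]; push_cast at *; linear_combination this
    | succ j =>
      have h1 := KK_D0 b j
      have h2 := KK_D0 b (j+1)
      rw [KK_ss b 0 j, KK_ss b 0 (j+1)]; push_cast at *; linear_combination h1 + h2
  | succ a ih =>
    cases j with
    | zero =>
      have := ih 0
      rw [KK_ss b (a+1) 0, KK_s0 b (a+1)]
      have e := KK_s0 b a
      push_cast at *; linear_combination this - 2 * ((a:ℝ)+1) * e
    | succ j =>
      have h1 := ih j
      have h2 := ih (j+1)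
      rw [KK_ss b (a+1) j, KK_ss b (a+1) (j+1)]
      have e := KK_ss b a j
      push_cast at *; linear_combination h1 + h2 - 2 * ((a:ℝ)+1) * e

theorem KK_norm (b a : ℕ) : ∑ j ∈ Finset.range (a + b + 1),
    KK b a j ^ 2 * (j.factorial * (a + b - j).factorial : ℝ) = 2 ^ (a+b) * a.factorial * b.factorial := by
  induction a with
  | zero =>
    have : ∀ j ∈ Finset.range (0 + b + 1), KK b 0 j ^ 2 * (j.factorial * (0 + b - j).factorial : ℝ)
        = b.factorial * (b.choose j : ℝ) := by
      intro j hj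
      have hj : j ≤ b := by simp at hj; omega
      have h := Nat.choose_mul_factorial_mul_factorial hj
      have h' : (b.choose j : ℝ) * j.factorial * (b-j).factorial = b.factorial := by exact_mod_cast h
      simp only [KK, mul_pow, ← pow_mul, zero_add]
      rw [mul_comm (b+j) 2, pow_mul]; norm_num
      linear_combination (b.choose j : ℝ) * h'
    rw [Finset.sum_congr rfl this, ← Finset.mul_sum]
    have h2 := Nat.sum_range_choose b
    have h2' : ∑ j ∈ Finset.range (b+1), (b.choose j : ℝ) = 2^b := by exact_mod_cast h2
    simp [h2']; ring
  | succ a ih =>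
    have key : ∑ j ∈ Finset.range (a + 1 + b + 1),
        KK b (a+1) j ^ 2 * (j.factorial * (a + 1 + b - j).factorial : ℝ)
        = ∑ j ∈ Finset.range (a + b + 1), KK b a j * (j.factorial * (a + b - j).factorial : ℝ) *
          (((j:ℝ)+1) * KK b (a+1) (j+1) + ((a:ℝ) + 1 + b - j) * KK b (a+1) j) := by
      have e1 : ∀ j ∈ Finset.range (a+b+1), KK b a j * (j.factorial * (a + b - j).factorial : ℝ) *
          (((j:ℝ)+1) * KK b (a+1) (j+1) + ((a:ℝ) + 1 + b - j) * KK b (a+1) j)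
          = KK b a j * KK b (a+1) (j+1) * ((j+1).factorial * (a+1+b-(j+1)).factorial : ℝ)
          + KK b a j * KK b (a+1) j * (j.factorial * (a+1+b-j).factorial : ℝ) := by
        intro j hj
        have hj : j ≤ a+b := by simp at hj; omega
        have f1 : a + 1 + b - j = (a+b-j)+1 := by omega
        have f2 : a + 1 + b - (j+1) = a+b-j := by omega
        rw [f1, f2, Nat.factorial_succ, Nat.factorial_succ]; push_cast [Nat.cast_sub hj]; ring
      rw [Finset.sum_congr rfl e1, Finset.sum_add_distrib]
      have e2 : ∑ j ∈ Finset.range (a+b+1), KK b a j * KK b (a+1) j * (j.factorial * (a+1+b-j).factorial : ℝ)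
        = ∑ j ∈ Finset.range (a+b+1+1), KK b a j * KK b (a+1) j * (j.factorial * (a+1+b-j).factorial : ℝ) := by
        rw [Finset.sum_range_succ _ (a+b+1), KK_zero_of_lt b a (a+b+1) (by omega)]; simp
      rw [e2, Finset.sum_range_succ' _ (a+b+1), show a+1+b+1 = a+b+1+1 by ring, Finset.sum_range_succ' _ (a+b+1), ← add_assoc, ← Finset.sum_add_distrib]
      congr 1
      · apply Finset.sum_congr rfl
        intro j _
        have e : KK b (a+1) (j+1) = KK b a j + KK b a (j+1) := by rw [KK]
        rw [e]; ring
      · have e : KK b (a+1) 0 = KK b a 0 := by rw [KK]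
        rw [e]; ring
    rw [key]
    simp_rw [KK_D]
    have : ∀ j ∈ Finset.range (a+b+1), KK b a j * (j.factorial * (a + b - j).factorial : ℝ) * (2 * ((a:ℝ)+1) * KK b a j) = 2 * ((a:ℝ)+1) * (KK b a j ^ 2 * (j.factorial * (a + b - j).factorial : ℝ)) := by
      intro j _; ring
    rw [Finset.sum_congr rfl this, ← Finset.mul_sum, ih, Nat.factorial_succ]
    push_cast; ring

theorem KK_expand (b a : ℕ) (x y : ℝ) : (x+y)^a * (x-y)^b =
    ∑ j ∈ Finset.range (a+b+1), KK b a j * x^j * y^(a+b-j) := by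
  induction a with
  | zero =>
    rw [pow_zero, one_mul, sub_eq_add_neg, add_pow]
    simp only [zero_add]
    apply Finset.sum_congr rfl
    intro j hj
    have hj : j ≤ b := by simp at hj; omega
    obtain ⟨c, rfl⟩ := Nat.exists_eq_add_of_le hj
    simp only [KK, Nat.add_sub_cancel_left, neg_pow y]
    have : ((-1:ℝ))^(j+c+j) = (-1)^c := by
      rw [show j+c+j = 2*j+c by ring, pow_add, pow_mul]; norm_num
    rw [this]; ring
  | succ a ih =>
    rw [pow_succ, mul_right_comm, ih, Finset.sum_mul]
    have e1 : ∀ j ∈ Finset.range (a+b+1), KK b a j * x^j * y^(a+b-j) * (x+y)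
        = KK b a j * x^(j+1) * y^(a+1+b-(j+1)) + KK b a j * x^j * y^(a+1+b-j) := by
      intro j hj
      have hj : j ≤ a+b := by simp at hj; omega
      have f1 : a + 1 + b - j = (a+b-j)+1 := by omega
      have f2 : a + 1 + b - (j+1) = a+b-j := by omega
      rw [f1, f2]; ring
    rw [Finset.sum_congr rfl e1, Finset.sum_add_distrib]
    have e2 : ∑ j ∈ Finset.range (a+b+1), KK b a j * x^j * y^(a+1+b-j)
        = ∑ j ∈ Finset.range (a+b+1+1), KK b a j * x^j * y^(a+1+b-j) := by
      rw [Finset.sum_range_succ _ (a+b+1), KK_zero_of_lt b a (a+b+1) (by omega)]; simp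
    rw [e2, Finset.sum_range_succ' _ (a+b+1), show a+1+b+1 = a+b+1+1 by ring, Finset.sum_range_succ' _ (a+b+1), ← add_assoc, ← Finset.sum_add_distrib]
    congr 1
    · apply Finset.sum_congr rfl
      intro j _
      have e : KK b (a+1) (j+1) = KK b a j + KK b a (j+1) := by rw [KK]
      rw [e]; ring

theorem KK_b0 (a j : ℕ) : KK 0 a j = a.choose j := by
  induction a generalizing j with
  | zero => cases j <;> simp [KK]
  | succ a ih => cases j with
    | zero => simp [KK, ih]
    | succ j => simp [KK, ih, Nat.choose_succ_succ]

theorem sum_even (N : ℕ) (f : ℕ → ℝ) (h : ∀ j, Odd j → f j = 0) :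
    ∑ j ∈ Finset.range (2*N+1), f j = ∑ l ∈ Finset.range (N+1), f (2*l) := by
  induction N with
  | zero => simp
  | succ N ih => 
    rw [show 2*(N+1)+1 = 2*N+1+1+1 by ring, Finset.sum_range_succ, Finset.sum_range_succ, ih, Finset.sum_range_succ _ (N+1), h (2*N+1) ⟨N, rfl⟩]
    simp [mul_add]

theorem KK_even (m q : ℕ) (x y : ℝ) :
    ((x+y)^(2*m) * (x-y)^(2*q) + (x-y)^(2*m) * (x+y)^(2*q)) / 2 =
    ∑ l ∈ Finset.range (m+q+1), KK (2*q) (2*m) (2*l) * x^(2*l) * y^(2*(m+q-l)) := by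
  have h1 := KK_expand (2*q) (2*m) x y
  have h2 := KK_expand (2*q) (2*m) x (-y)
  rw [← sub_eq_add_neg, sub_neg_eq_add] at h2
  rw [h1, h2, ← Finset.sum_add_distrib, Finset.sum_div, show 2*m+2*q+1 = 2*(m+q)+1 by ring, sum_even]
  · apply Finset.sum_congr rfl
    intro l hl
    have : 2*m+2*q-2*l = 2*(m+q-l) := by omega
    rw [this, pow_mul (-y), neg_sq, ← pow_mul]; ring
  · intro j hj
    rcases le_or_gt j (2*m+2*q) with h | h
    · have : Odd (2*m+2*q-j) := by
        rcases hj with ⟨k, rfl⟩; exact ⟨m+q-k-1, by omega⟩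
      rw [this.neg_pow]; ring
    · rw [KK_zero_of_lt _ _ _ h]; simp

theorem KK_norm_even (m q : ℕ) : ∑ l ∈ Finset.range (m + q + 1),
    KK (2*q) (2*m) (2*l) ^ 2 * ((2*l).factorial * (2*(m+q-l)).factorial : ℝ)
     ≤ 4 ^ (m+q) * (2*m).factorial * (2*q).factorial := by
  have h := KK_norm (2*q) (2*m)
  have e : (4:ℝ)^(m+q) = 2^(2*m+2*q) := by rw [← mul_add, pow_mul]; norm_num
  rw [e, ← h]
  have : ∑ l ∈ Finset.range (m + q + 1),
    KK (2*q) (2*m) (2*l) ^ 2 * ((2*l).factorial * (2*(m+q-l)).factorial : ℝ) = 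
    ∑ j ∈ (Finset.range (m+q+1)).image (fun l => 2*l), KK (2*q) (2*m) j ^ 2 * (j.factorial * (2*m + 2*q - j).factorial : ℝ) := by
    rw [Finset.sum_image (by intro a _ b _ h; simpa using h)]
    apply Finset.sum_congr rfl
    intro l _
    rw [show 2*m+2*q-2*l = 2*(m+q-l) by omega]
  rw [this]
  apply Finset.sum_le_sum_of_subset_of_nonneg
  · intro j hj; simp at *; omega
  · intros; positivity

theorem cb_succ (l : ℕ) : ((l:ℝ)+1) * (l+1).centralBinom = 2*(2*l+1) * l.centralBinom := by
  exact_mod_cast Nat.succ_mul_centralBinom_succ l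

theorem cb_conv (n : ℕ) : ∑ l ∈ Finset.range (n+1), (l.centralBinom : ℝ) * (n-l).centralBinom = 4^n := by
  have hT : ∀ n : ℕ, 2 * ∑ l ∈ Finset.range (n+1), (l:ℝ) * ((l.centralBinom : ℝ) * (n-l).centralBinom)
     = n * ∑ l ∈ Finset.range (n+1), (l.centralBinom : ℝ) * (n-l).centralBinom := by
    intro n
    rw [two_mul]
    nth_rw 1 [← Finset.sum_range_reflect]
    rw [← Finset.sum_add_distrib, Finset.mul_sum]
    apply Finset.sum_congr rfl
    intro l hl
    have hl : l ≤ n := by simp at hl; omega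
    rw [show n + 1 - 1 - l = n - l by omega, show n - (n-l) = l by omega, Nat.cast_sub hl]; ring
  induction n with
  | zero => simp
  | succ n ih =>
    have h1 := hT (n+1)
    have h0 := hT n
    rw [ih] at h0
    rw [Finset.sum_range_succ'] at h1
    have : ∀ l ∈ Finset.range (n+1), ((l+1:ℕ):ℝ) * (((l+1).centralBinom : ℝ) * (n+1-(l+1)).centralBinom)
       = 4 * ((l:ℝ) * ((l.centralBinom : ℝ) * (n-l).centralBinom)) + 2 * ((l.centralBinom : ℝ) * (n-l).centralBinom) := by
      intro l _
      have := cb_succ l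
      rw [show n+1-(l+1) = n-l by omega]; push_cast
      linear_combination ((n-l).centralBinom:ℝ) * this
    rw [Finset.sum_congr rfl this, Finset.sum_add_distrib, ← Finset.mul_sum, ← Finset.mul_sum, ih] at h1
    simp only [Nat.cast_zero, zero_mul, add_zero] at h1
    have hn : ((n:ℝ)+1) ≠ 0 := by positivity
    apply mul_left_cancel₀ hn
    push_cast at h1 ⊢
    rw [← h1, pow_succ]; linear_combination 4 * h0

theorem cb_lower (m : ℕ) (hm : 2 ≤ m) : (9:ℝ)/32 * 16^m ≤ (m.centralBinom:ℝ)^2 * m := by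
  induction m, hm using Nat.le_induction with
  | base => simp [Nat.centralBinom, Nat.choose]; norm_num
  | succ m hm ih =>
    have h := cb_succ m
    have hm0 : (0:ℝ) < m := by positivity
    have e : ((m+1).centralBinom:ℝ) = 2*(2*m+1) * m.centralBinom / (m+1) := by
      rw [← h]; field_simp
    rw [e]; push_cast
    have : (2*(2*(m:ℝ)+1) * m.centralBinom / (m+1))^2 * (m+1) = (m.centralBinom:ℝ)^2 * m * (4*(2*m+1)^2 / (m*(m+1))) := by
      field_simp; ring
    rw [this, pow_succ, ← mul_assoc]
    apply mul_le_mul ih _ (by norm_num) (by positivity)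
    rw [le_div_iff₀ (by positivity)]; nlinarith

theorem cb_upper (n : ℕ) (hn : 4 ≤ n) : (n.centralBinom:ℝ) ≤ 35/128 * 4^n := by
  induction n, hn using Nat.le_induction with
  | base => simp [Nat.centralBinom, Nat.choose]; norm_num
  | succ m hm ih =>
    have h := cb_succ m
    have hm0 : (0:ℝ) < (m:ℝ)+1 := by positivity
    apply le_of_mul_le_mul_left _ hm0
    rw [h, pow_succ]; nlinarith

noncomputable def kap (l : ℕ) : ℝ := if l = 0 then 1 else if l = 1 then 117/400 else 1/4
noncomputable def vv (d l : ℕ) : ℝ := kap l * (2/(d:ℝ))^l / l.factorial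
noncomputable def cc (m q l : ℕ) : ℝ :=
  KK (2*q) (2*m) (2*l) * ((2*l).factorial * (2*(m+q-l)).factorial : ℝ) /
    (2^(m+q) * (2*m).factorial * (2*q).factorial)
noncomputable def bb (m : ℕ) : ℝ := if m = 0 then 0 else 1
noncomputable def FF (m q : ℕ) : ℝ := 1 - 41/125 * (bb m + bb q) + 41/20 * (bb m * bb q * (m+q))

theorem kap_pos (l : ℕ) : 0 < kap l := by unfold kap; split_ifs <;> norm_num
theorem kap_le (l : ℕ) (h : l ≠ 0) : kap l ≤ 117/400 := by unfold kap; split_ifs <;> first | contradiction | norm_num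
theorem kap_big (l : ℕ) (h : 2 ≤ l) : kap l = 1/4 := by
  unfold kap; rw [if_neg (by omega), if_neg (by omega)]
theorem kap_zero : kap 0 = 1 := by simp [kap]
theorem vv_zero (d : ℕ) : vv d 0 = 1 := by simp [vv, kap]
theorem vv_pos (d l : ℕ) (hd : 0 < d) : 0 < vv d l := by
  unfold vv; have := kap_pos l; positivity

theorem cb_fac (l : ℕ) : (l.centralBinom : ℝ) * (l.factorial : ℝ)^2 = (2*l).factorial := by
  have h := Nat.choose_mul_factorial_mul_factorial (show l ≤ 2*l by omega)
  rw [show 2*l-l = l by omega] at h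
  rw [Nat.centralBinom_eq_two_mul_choose, ← h]; push_cast; ring

theorem vv_sq (d l : ℕ) : ((2*l).factorial : ℝ) * vv d l ^ 2 = l.centralBinom * (kap l)^2 * ((2/(d:ℝ))^l)^2 := by
  rw [← cb_fac, vv]
  have : (l.factorial : ℝ) ≠ 0 := by positivity
  field_simp

theorem split_ends (n : ℕ) (hn : 1 ≤ n) (f : ℕ → ℝ) :
    ∑ l ∈ Finset.range (n+1), f l = f 0 + f n + ∑ l ∈ Finset.range (n-1), f (l+1) := by
  obtain ⟨k, rfl⟩ := Nat.exists_eq_add_of_le' hn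
  rw [Finset.sum_range_succ, Finset.sum_range_succ']; simp; ring

theorem kap_sum (n : ℕ) (hn : 4 ≤ n) :
    ∑ l ∈ Finset.range (n+1), (l.centralBinom : ℝ) * (n-l).centralBinom * (kap l * kap (n-l))^2
      ≤ 4^n * (9391/256000) := by
  have h := cb_conv n
  rw [split_ends n (by omega)] at h ⊢
  have hu := cb_upper n hn
  have hInn : ∑ l ∈ Finset.range (n-1), ((l+1).centralBinom : ℝ) * (n-(l+1)).centralBinom * (kap (l+1) * kap (n-(l+1)))^2
     ≤ (117/1600)^2 * ∑ l ∈ Finset.range (n-1), ((l+1).centralBinom : ℝ) * (n-(l+1)).centralBinom := by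
    rw [Finset.mul_sum]
    apply Finset.sum_le_sum
    intro l hl
    simp at hl
    have : kap (l+1) * kap (n-(l+1)) ≤ 117/1600 := by
      have h1 := kap_le (l+1) (by omega)
      have h2 := kap_le (n-(l+1)) (by omega)
      have p1 := kap_pos (l+1)
      have p2 := kap_pos (n-(l+1))
      rcases Nat.lt_or_ge (l+1) 2 with h | h
      · rw [kap_big (n-(l+1)) (by omega)] at *; linarith
      · rw [kap_big (l+1) h] at *; linarith
    have h3 : (kap (l+1) * kap (n-(l+1)))^2 ≤ (117/1600)^2 := by
      apply pow_le_pow_left₀ _ this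
      have p1 := kap_pos (l+1)
      have p2 := kap_pos (n-(l+1))
      positivity
    rw [mul_comm ((117/1600:ℝ)^2)]
    gcongr
  have hb := kap_big n (by omega)
  simp only [Nat.sub_zero, Nat.sub_self, kap_zero, hb, Nat.centralBinom_zero, Nat.cast_one, one_mul, mul_one] at h ⊢
  have h4 : (0:ℝ) < 4^n := by positivity
  nlinarith

theorem coll_bound (d m q : ℕ) (hd : 0 < d) (hm : 2 ≤ m) (hq : 2 ≤ q) :
    ∑ l ∈ Finset.range (m+q+1), |cc m q l| * (vv d l * vv d (m+q-l)) ≤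
      41/20 * ((m:ℝ)+q) * (vv d m * vv d q) := by
  have hvm := vv_pos d m hd
  have hvq := vv_pos d q hd
  apply abs_le_of_sq_le_sq' _ (by positivity) |>.2
  have e : ∀ l ∈ Finset.range (m+q+1), |cc m q l| * (vv d l * vv d (m+q-l)) =
     (|KK (2*q) (2*m) (2*l)| * √((2*l).factorial * (2*(m+q-l)).factorial : ℝ)) *
     (√((2*l).factorial * (2*(m+q-l)).factorial : ℝ) * (vv d l * vv d (m+q-l)))
      * (2^(m+q) * (2*m).factorial * (2*q).factorial : ℝ)⁻¹ := by
    intro l _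
    unfold cc
    rw [abs_div, abs_mul, abs_of_pos (show (0:ℝ) < ((2*l).factorial * (2*(m+q-l)).factorial : ℝ) by positivity),
      abs_of_pos (show (0:ℝ) < 2^(m+q) * (2*m).factorial * (2*q).factorial by positivity)]
    have := Real.mul_self_sqrt (show (0:ℝ) ≤ ((2*l).factorial * (2*(m+q-l)).factorial : ℝ) by positivity)
    rw [div_eq_mul_inv]
    linear_combination (-(|KK (2*q) (2*m) (2*l)| * (vv d l * vv d (m+q-l)) * (2^(m+q) * (2*m).factorial * (2*q).factorial : ℝ)⁻¹)) * this
  rw [Finset.sum_congr rfl e, ← Finset.sum_mul, mul_pow]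
  have cs := Finset.sum_mul_sq_le_sq_mul_sq (Finset.range (m+q+1))
    (fun l => |KK (2*q) (2*m) (2*l)| * √((2*l).factorial * (2*(m+q-l)).factorial : ℝ))
    (fun l => √((2*l).factorial * (2*(m+q-l)).factorial : ℝ) * (vv d l * vv d (m+q-l)))
  have e1 : ∑ l ∈ Finset.range (m+q+1), (|KK (2*q) (2*m) (2*l)| * √((2*l).factorial * (2*(m+q-l)).factorial : ℝ))^2
     ≤ 4 ^ (m+q) * (2*m).factorial * (2*q).factorial := by
    refine le_trans (le_of_eq ?_) (KK_norm_even m q)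
    apply Finset.sum_congr rfl
    intro l _
    rw [mul_pow, sq_abs, Real.sq_sqrt (by positivity)]
  have e2 : ∑ l ∈ Finset.range (m+q+1), (√((2*l).factorial * (2*(m+q-l)).factorial : ℝ) * (vv d l * vv d (m+q-l)))^2
     ≤ ((2/(d:ℝ))^(m+q))^2 * (4^(m+q) * (9391/256000)) := by
    refine le_trans (le_of_eq ?_) (mul_le_mul_of_nonneg_left (kap_sum (m+q) (by omega)) (by positivity))
    rw [Finset.mul_sum]
    apply Finset.sum_congr rfl
    intro l hl
    have hl : l ≤ m+q := by simp at hl; omega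
    rw [mul_pow, Real.sq_sqrt (by positivity)]
    have h1 := vv_sq d l
    have h2 := vv_sq d (m+q-l)
    have h3 : (2/(d:ℝ))^(m+q) = (2/(d:ℝ))^l * (2/(d:ℝ))^(m+q-l) := by
      rw [← pow_add]; congr 1; omega
    rw [h3]
    calc _ = (((2*l).factorial : ℝ) * vv d l ^ 2) * (((2*(m+q-l)).factorial : ℝ) * vv d (m+q-l) ^ 2) := by ring
      _ = _ := by rw [h1, h2]; ring
  have lo : (4:ℝ)^(m+q) * (9/32) * 2 ≤ ((m.centralBinom : ℝ) * q.centralBinom) * (m+q) := by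
    have a1 := cb_lower m hm
    have a2 := cb_lower q hq
    apply abs_le_of_sq_le_sq' _ (by positivity) |>.2
    have am : (m:ℝ)*q*4 ≤ (m+q)^2 := by nlinarith [sq_nonneg ((m:ℝ)-q)]
    have a3 := mul_le_mul a1 a2 (by positivity) (by positivity)
    have e4 : ((4:ℝ)^(m+q) * (9/32) * 2)^2 = (9/32 * 16^m * (9/32*16^q)) * 4 := by
      rw [mul_pow, mul_pow, ← pow_mul, mul_comm (m+q) 2, pow_mul]; norm_num; rw [pow_add]; ring
    rw [e4]
    calc _ ≤ ((m.centralBinom:ℝ)^2 * m * ((q.centralBinom:ℝ)^2 * q)) * 4 := by gcongr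
      _ = (m.centralBinom * q.centralBinom : ℝ)^2 * ((m:ℝ)*q*4) := by ring
      _ ≤ (m.centralBinom * q.centralBinom : ℝ)^2 * (m+q)^2 := by gcongr
      _ = _ := by ring
  have hfin : ((2/(d:ℝ))^(m+q))^2 * (4^(m+q) * (9391/256000)) ≤ ((2*m).factorial : ℝ) * (2*q).factorial * (41/20 * ((m:ℝ)+q) * (vv d m * vv d q))^2 := by
    have h1 := vv_sq d m
    have h2 := vv_sq d q
    rw [kap_big m hm] at h1
    rw [kap_big q hq] at h2
    calc _ ≤ ((2/(d:ℝ))^(m+q))^2 * ((41/20*((m:ℝ)+q))^2 * (1/256) * (m.centralBinom * q.centralBinom)) := by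
            apply mul_le_mul_of_nonneg_left _ (by positivity)
            have h4 : (4:ℝ) ≤ (m:ℝ)+q := by exact_mod_cast (by omega : 4 ≤ m+q)
            have h5 : (0:ℝ) < 4^(m+q) := by positivity
            have h6 : (0:ℝ) < (m.centralBinom * q.centralBinom) := by
              have := Nat.centralBinom_pos m
              have := Nat.centralBinom_pos q
              positivity
            have h7 : (m.centralBinom * q.centralBinom : ℝ) * (m+q) * 4 ≤ (m.centralBinom * q.centralBinom) * (m+q) * (m+q) := by gcongr
            nlinarith
      _ = (41/20*((m:ℝ)+q))^2 * (((2*m).factorial : ℝ) * vv d m ^ 2) * (((2*q).factorial : ℝ) * vv d q ^ 2) := by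
            rw [h1, h2, pow_add]; ring
      _ = _ := by ring
  calc _ ≤ ((4 ^ (m+q) * (2*m).factorial * (2*q).factorial : ℝ) * (((2/(d:ℝ))^(m+q))^2 * (4^(m+q) * (9391/256000)))) * ((2^(m+q) * (2*m).factorial * (2*q).factorial : ℝ)⁻¹)^2 := by
        gcongr
        exact cs.trans (mul_le_mul e1 e2 (by positivity) (by positivity))
    _ ≤ ((4 ^ (m+q) * (2*m).factorial * (2*q).factorial : ℝ) * (((2*m).factorial : ℝ) * (2*q).factorial * (41/20 * ((m:ℝ)+q) * (vv d m * vv d q))^2)) * ((2^(m+q) * (2*m).factorial * (2*q).factorial : ℝ)⁻¹)^2 := by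
        gcongr
    _ = _ := by
        have : (4:ℝ)^(m+q) = (2^(m+q))^2 := by rw [← pow_mul, mul_comm, pow_mul]; norm_num
        rw [this]; field_simp

theorem cc_m0 (m l : ℕ) (hl : l ≤ m) : cc m 0 l = (2^m)⁻¹ := by
  unfold cc
  rw [mul_zero, KK_b0, add_zero]
  have h := Nat.choose_mul_factorial_mul_factorial (show 2*l ≤ 2*m by omega)
  rw [show 2*m-2*l = 2*(m-l) by omega] at h
  have h' : (((2*m).choose (2*l) : ℕ):ℝ) * ((2*l).factorial * (2*(m-l)).factorial) = (2*m).factorial := by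
    rw [← h]; push_cast; ring
  rw [h']; simp; field_simp

theorem cc_0q (q l : ℕ) (hl : l ≤ q) : cc 0 q l = (2^q)⁻¹ := by
  unfold cc
  rw [mul_zero, zero_add]
  have h := Nat.choose_mul_factorial_mul_factorial (show 2*l ≤ 2*q by omega)
  rw [show 2*q-2*l = 2*(q-l) by omega] at h
  have h' : (((2*q).choose (2*l) : ℕ):ℝ) * ((2*l).factorial * (2*(q-l)).factorial) = (2*q).factorial := by
    rw [← h]; push_cast; ring
  have : KK (2*q) 0 (2*l) = ((2*q).choose (2*l) : ℕ) := by
    rw [KK, ← mul_add, pow_mul]; norm_num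
  rw [this, h']; simp; field_simp

theorem single_bound (d m : ℕ) (hd : 0 < d) (hm : 2 ≤ m) :
    ∑ l ∈ Finset.range (m+1), (2^m)⁻¹ * (vv d l * vv d (m-l)) ≤ 84/125 * vv d m := by
  have e : ∀ l ∈ Finset.range (m+1), (2^m)⁻¹ * (vv d l * vv d (m-l)) =
     ((2^m)⁻¹ * (2/(d:ℝ))^m / m.factorial) * ((m.choose l : ℝ) * (kap l * kap (m-l))) := by
    intro l hl
    have hl : l ≤ m := by simp at hl; omega
    have h := Nat.choose_mul_factorial_mul_factorial hl
    have h3 : (2/(d:ℝ))^m = (2/(d:ℝ))^l * (2/(d:ℝ))^(m-l) := by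
      rw [← pow_add]; congr 1; omega
    have h4 : (m.choose l : ℝ) / m.factorial = 1 / (l.factorial * (m-l).factorial) := by
      rw [div_eq_div_iff (by positivity) (by positivity), ← h]; push_cast; ring
    unfold vv
    rw [h3]
    calc _ = (2^m)⁻¹ * ((2/(d:ℝ))^l * (2/(d:ℝ))^(m-l)) * (kap l * kap (m-l)) * (1 / (l.factorial * (m-l).factorial)) := by
          field_simp
      _ = _ := by rw [← h4]; ring
  rw [Finset.sum_congr rfl e, ← Finset.mul_sum]
  have hs : ∑ l ∈ Finset.range (m+1), ((m.choose l : ℝ) * (kap l * kap (m-l))) ≤ 84/125 * 2^m * (1/4) := by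
    have h2 : ∑ j ∈ Finset.range (m+1), (m.choose j : ℝ) = 2^m := by exact_mod_cast Nat.sum_range_choose m
    rw [split_ends m (by omega)] at h2 ⊢
    have hInn : ∑ l ∈ Finset.range (m-1), ((m.choose (l+1) : ℝ) * (kap (l+1) * kap (m-(l+1)))) ≤ (117/400)^2 * ∑ l ∈ Finset.range (m-1), (m.choose (l+1) : ℝ) := by
      rw [Finset.mul_sum]
      apply Finset.sum_le_sum
      intro l hl
      simp at hl
      have h1 := kap_le (l+1) (by omega)
      have h2 := kap_le (m-(l+1)) (by omega)
      have p1 := kap_pos (l+1)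
      have p2 := kap_pos (m-(l+1))
      rw [mul_comm ((117/400:ℝ)^2), sq]
      gcongr
    simp only [Nat.choose_zero_right, Nat.choose_self, kap_zero, Nat.sub_zero, Nat.sub_self, kap_big m hm, Nat.cast_one] at h2 ⊢
    have : (4:ℝ) ≤ 2^m := by
      calc (4:ℝ) = 2^2 := by norm_num
        _ ≤ 2^m := pow_le_pow_right₀ (by norm_num) hm
    nlinarith
  calc _ ≤ ((2^m)⁻¹ * (2/(d:ℝ))^m / m.factorial) * (84/125 * 2^m * (1/4)) := by gcongr
    _ = _ := by
      unfold vv; rw [kap_big m hm]; field_simp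

theorem pair_bound (d m q : ℕ) (hd : 0 < d) (hm : m ≠ 1) (hq : q ≠ 1) :
    ∑ l ∈ Finset.range (m+q+1), |cc m q l| * (vv d l * vv d (m+q-l)) ≤
      FF m q * (vv d m * vv d q) := by
  rcases Nat.eq_zero_or_pos m with rfl | hm0
  · have e : ∀ l ∈ Finset.range (0+q+1), |cc 0 q l| * (vv d l * vv d (0+q-l)) = (2^q)⁻¹ * (vv d l * vv d (q-l)) := by
      intro l hl
      have hl : l ≤ q := by simp at hl; omega
      rw [cc_0q q l hl, zero_add, abs_of_pos (by positivity)]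
    rw [Finset.sum_congr rfl e, zero_add]
    rcases Nat.eq_zero_or_pos q with rfl | hq0
    · simp [FF, bb, vv_zero]
    · refine (single_bound d q hd (by omega)).trans (le_of_eq ?_)
      simp [FF, bb, vv_zero, hq0.ne']; left; norm_num
  · rcases Nat.eq_zero_or_pos q with rfl | hq0
    · have e : ∀ l ∈ Finset.range (m+0+1), |cc m 0 l| * (vv d l * vv d (m+0-l)) = (2^m)⁻¹ * (vv d l * vv d (m-l)) := by
        intro l hl
        have hl : l ≤ m := by simp at hl; omega
        rw [cc_m0 m l hl, add_zero, abs_of_pos (by positivity)]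
      rw [Finset.sum_congr rfl e, add_zero]
      refine (single_bound d m hd (by omega)).trans (le_of_eq ?_)
      simp [FF, bb, vv_zero, hm0.ne']; left; norm_num
    · refine (coll_bound d m q hd (by omega) (by omega)).trans ?_
      have hvm := vv_pos d m hd
      have hvq := vv_pos d q hd
      apply mul_le_mul_of_nonneg_right _ (by positivity)
      simp [FF, bb, hm0.ne', hq0.ne']; norm_num

noncomputable def av (k : ℕ) (x : ℝ) : ℝ := x ^ (2*k) / (2*k).factorial

theorem av_nonneg (k : ℕ) (x : ℝ) : 0 ≤ av k x := by
  unfold av; rw [pow_mul]; positivity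

theorem av_neg (k : ℕ) (x : ℝ) : av k (-x) = av k x := by
  unfold av; rw [pow_mul, neg_sq, ← pow_mul]

theorem av_pair (m q : ℕ) (u w : ℝ) :
    (av m ((u-w)/√2) * av q ((u+w)/√2) + av m ((u+w)/√2) * av q ((w-u)/√2)) / 2
    = ∑ l ∈ Finset.range (m+q+1), cc m q l * (av l u * av (m+q-l) w) := by
  have h := KK_even m q u w
  rw [show (w-u)/√2 = -((u-w)/√2) by ring, av_neg]
  have hs : ∀ k : ℕ, (√2:ℝ)^(2*k) = 2^k := by
    intro k; rw [pow_mul, Real.sq_sqrt (by norm_num)]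
  have e : (av m ((u-w)/√2) * av q ((u+w)/√2) + av m ((u+w)/√2) * av q ((u-w)/√2)) / 2
     = (((u+w)^(2*m) * (u-w)^(2*q) + (u-w)^(2*m) * (u+w)^(2*q)) / 2) * (2^(m+q) * (2*m).factorial * (2*q).factorial : ℝ)⁻¹ := by
    unfold av
    simp only [div_pow, hs, pow_add]
    field_simp
    ring
  rw [e, h, Finset.sum_mul]
  apply Finset.sum_congr rfl
  intro l _
  unfold cc av
  field_simp

section Walk

variable {d : ℕ}

noncomputable def Am (m : Fin d → ℕ) (x : Fin d → ℝ) : ℝ :=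
  (d.factorial : ℝ)⁻¹ * ∑ σ : Equiv.Perm (Fin d), ∏ k, av (m k) (x (σ k))

theorem Am_nonneg (m : Fin d → ℕ) (x : Fin d → ℝ) : 0 ≤ Am m x := by
  unfold Am
  apply mul_nonneg (by positivity)
  apply Finset.sum_nonneg; intro σ _
  apply Finset.prod_nonneg; intros; exact av_nonneg _ _

noncomputable def rr (e : Fin d × Fin d) (x : Fin d → ℝ) : Fin d → ℝ :=
  (rotM d e.1 e.2 (Real.pi/4)).mulVec x

theorem rr_apply (i j : Fin d) (hij : i ≠ j) (x : Fin d → ℝ) (k : Fin d) :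
    rr (i,j) x k = if k = i then (x i - x j)/√2 else if k = j then (x i + x j)/√2 else x k := by
  have s2 : √2/2 = 1/√2 := by
    rw [div_eq_div_iff (by norm_num) (by positivity)]; norm_num
  unfold rr rotM
  simp only [Matrix.mulVec, dotProduct, Matrix.of_apply, Real.cos_pi_div_four, Real.sin_pi_div_four, s2]
  by_cases hi : k = i
  · subst hi
    have : ∀ l, (if k = k ∧ l = k then 1/√2 else if k = k ∧ l = j then -(1/√2) else if k = j ∧ l = k then 1/√2 else if k = j ∧ l = j then 1/√2 else if k = l then 1 else 0) * x l
      = (if l = k then 1/√2 * x l else 0) + (if l = j then -(1/√2) * x l else 0) := by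
      intro l
      by_cases h1 : l = k
      · subst h1; simp [hij]
      · by_cases h2 : l = j
        · subst h2; simp [h1, hij]
        · simp [h1, h2, hij, Ne.symm h1]
    refine (Finset.sum_congr rfl (fun l _ => this l)).trans ?_
    rw [Finset.sum_add_distrib]
    simp; ring
  · by_cases hj : k = j
    · subst hj
      have : ∀ l, (if k = i ∧ l = i then 1/√2 else if k = i ∧ l = k then -(1/√2) else if k = k ∧ l = i then 1/√2 else if k = k ∧ l = k then 1/√2 else if k = l then 1 else 0) * x l
        = (if l = i then 1/√2 * x l else 0) + (if l = k then (1/√2) * x l else 0) := by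
        intro l
        by_cases h1 : l = i
        · subst h1; simp [hi, hij]
        · by_cases h2 : l = k
          · subst h2; simp [h1]
          · simp [h1, h2, Ne.symm h2]
      refine (Finset.sum_congr rfl (fun l _ => this l)).trans ?_
      rw [Finset.sum_add_distrib]
      simp [hi]; ring
    · simp [hi, hj]

theorem prod_two (i j : Fin d) (hij : i ≠ j) (f : Fin d → ℝ) :
    ∏ k, f k = f i * f j * ∏ k ∈ (Finset.univ.erase i).erase j, f k := by
  rw [← Finset.mul_prod_erase Finset.univ f (Finset.mem_univ i),
    ← Finset.mul_prod_erase (Finset.univ.erase i) f (a := j) (by simp [hij.symm])]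
  ring

theorem sum_two (i j : Fin d) (hij : i ≠ j) (f : Fin d → ℕ) :
    ∑ k, f k = f i + f j + ∑ k ∈ (Finset.univ.erase i).erase j, f k := by
  rw [← Finset.add_sum_erase Finset.univ f (Finset.mem_univ i),
    ← Finset.add_sum_erase (Finset.univ.erase i) f (a := j) (by simp [hij.symm])]
  ring

def up (m : Fin d → ℕ) (e : Fin d × Fin d) (l : ℕ) : Fin d → ℕ :=
  Function.update (Function.update m e.1 l) e.2 (m e.1 + m e.2 - l)

theorem up_fst (m : Fin d → ℕ) (i j : Fin d) (hij : i ≠ j) (l : ℕ) : up m (i,j) l i = l := by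
  simp [up, hij]
theorem up_snd (m : Fin d → ℕ) (i j : Fin d) (l : ℕ) : up m (i,j) l j = m i + m j - l := by
  simp [up]
theorem up_oth (m : Fin d → ℕ) (i j : Fin d) (l : ℕ) (k : Fin d) (hk : k ∈ (Finset.univ.erase i).erase j) :
    up m (i,j) l k = m k := by
  simp at hk; simp [up, hk]

theorem up_sum (m : Fin d → ℕ) (i j : Fin d) (hij : i ≠ j) (l : ℕ) (hl : l ≤ m i + m j) :
    ∑ k, up m (i,j) l k = ∑ k, m k := by
  have h3 : ∑ k ∈ (Finset.univ.erase i).erase j, up m (i,j) l k = ∑ k ∈ (Finset.univ.erase i).erase j, m k :=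
    Finset.sum_congr rfl (up_oth m i j l)
  rw [sum_two i j hij, sum_two i j hij m, up_fst m i j hij, up_snd, h3]
  omega

theorem pair_step (m : Fin d → ℕ) (i j : Fin d) (hij : i ≠ j) (σ : Equiv.Perm (Fin d)) (x : Fin d → ℝ) :
    (∏ k, av (m k) (rr (σ i, σ j) x (σ k)) + ∏ k, av (m k) (rr (σ j, σ i) x (σ k))) / 2
    = ∑ l ∈ Finset.range (m i + m j + 1), cc (m i) (m j) l * ∏ k, av (up m (i,j) l k) (x (σ k)) := by
  have hσ : σ i ≠ σ j := fun h => hij (σ.injective h)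
  have hoth : ∀ k ∈ (Finset.univ.erase i).erase j, av (m k) (rr (σ i, σ j) x (σ k)) = av (m k) (x (σ k)) := by
    intro k hk; simp at hk
    rw [rr_apply _ _ hσ, if_neg (by simp [hk]), if_neg (by simp [hk])]
  have hoth' : ∀ k ∈ (Finset.univ.erase i).erase j, av (m k) (rr (σ j, σ i) x (σ k)) = av (m k) (x (σ k)) := by
    intro k hk; simp at hk
    rw [rr_apply _ _ hσ.symm, if_neg (by simp [hk]), if_neg (by simp [hk])]
  have hup : ∀ l, ∏ k ∈ (Finset.univ.erase i).erase j, av (up m (i,j) l k) (x (σ k)) = ∏ k ∈ (Finset.univ.erase i).erase j, av (m k) (x (σ k)) := by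
    intro l; apply Finset.prod_congr rfl; intro k hk; rw [up_oth m i j l k hk]
  simp only [prod_two i j hij, Finset.prod_congr rfl hoth, Finset.prod_congr rfl hoth', hup, up_fst m i j hij, up_snd]
  have h := av_pair (m i) (m j) (x (σ i)) (x (σ j))
  rw [rr_apply _ _ hσ, rr_apply _ _ hσ, rr_apply _ _ hσ.symm, rr_apply _ _ hσ.symm]
  simp only [if_true, hσ, hσ.symm, if_false]
  rw [add_comm (x (σ j)) (x (σ i))]
  rw [← add_mul, mul_div_right_comm, h, Finset.sum_mul]
  apply Finset.sum_congr rfl; intro l _; ring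

theorem Am_step (m : Fin d → ℕ) (x : Fin d → ℝ) :
    ∑ e ∈ (Finset.univ : Finset (Fin d)).offDiag, Am m (rr e x)
    = ∑ e ∈ (Finset.univ : Finset (Fin d)).offDiag, ∑ l ∈ Finset.range (m e.1 + m e.2 + 1),
        cc (m e.1) (m e.2) l * Am (up m e l) x := by
  have key : ∀ σ : Equiv.Perm (Fin d), ∑ e ∈ (Finset.univ : Finset (Fin d)).offDiag, ∏ k, av (m k) (rr e x (σ k))
     = ∑ e ∈ (Finset.univ : Finset (Fin d)).offDiag, ∑ l ∈ Finset.range (m e.1 + m e.2 + 1),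
        cc (m e.1) (m e.2) l * ∏ k, av (up m e l k) (x (σ k)) := by
    intro σ
    have h1 : ∑ e ∈ (Finset.univ : Finset (Fin d)).offDiag, ∏ k, av (m k) (rr e x (σ k))
      = ∑ e ∈ (Finset.univ : Finset (Fin d)).offDiag, ∏ k, av (m k) (rr (σ e.1, σ e.2) x (σ k)) := by
      symm
      apply Finset.sum_equiv (Equiv.prodCongr σ σ)
      · intro e; simp
      · intro e _; rfl
    have h2 : ∑ e ∈ (Finset.univ : Finset (Fin d)).offDiag, ∏ k, av (m k) (rr (σ e.1, σ e.2) x (σ k))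
      = ∑ e ∈ (Finset.univ : Finset (Fin d)).offDiag, ∏ k, av (m k) (rr (σ e.2, σ e.1) x (σ k)) := by
      apply Finset.sum_equiv (Equiv.prodComm _ _)
      · intro e; simp [eq_comm]
      · intro e _; rfl
    have h3 : ∑ e ∈ (Finset.univ : Finset (Fin d)).offDiag, ∏ k, av (m k) (rr e x (σ k))
      = ∑ e ∈ (Finset.univ : Finset (Fin d)).offDiag, (∏ k, av (m k) (rr (σ e.1, σ e.2) x (σ k)) + ∏ k, av (m k) (rr (σ e.2, σ e.1) x (σ k)))/2 := by
      rw [← Finset.sum_div, Finset.sum_add_distrib, ← h2, ← h1]; ring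
    rw [h3]
    apply Finset.sum_congr rfl
    rintro ⟨i, j⟩ he
    simp at he
    exact pair_step m i j he σ x
  unfold Am
  rw [← Finset.mul_sum, Finset.sum_comm, Finset.sum_congr rfl (fun σ _ => key σ), Finset.sum_comm, Finset.mul_sum]
  apply Finset.sum_congr rfl; intro e _
  rw [Finset.sum_comm, Finset.mul_sum]
  apply Finset.sum_congr rfl; intro l _
  rw [← Finset.mul_sum]; ring

theorem rr_sphere (e : Fin d × Fin d) (he : e ∈ (Finset.univ : Finset (Fin d)).offDiag) (x : Fin d → ℝ) :
    ∑ k, rr e x k ^ 2 = ∑ k, x k ^ 2 := by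
  obtain ⟨i, j⟩ := e
  have hij : i ≠ j := by simpa using he
  have two : ∀ f : Fin d → ℝ, ∑ k, f k = f i + f j + ∑ k ∈ (Finset.univ.erase i).erase j, f k := by
    intro f
    rw [← Finset.add_sum_erase Finset.univ f (Finset.mem_univ i),
      ← Finset.add_sum_erase (Finset.univ.erase i) f (a := j) (by simp [hij.symm])]
    ring
  rw [two, two (fun k => x k ^ 2)]
  congr 1
  · simp only [rr_apply i j hij, if_true, hij.symm, if_false, div_pow, Real.sq_sqrt (show (0:ℝ) ≤ 2 by norm_num)]
    ring
  · apply Finset.sum_congr rfl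
    intro k hk; simp at hk
    rw [rr_apply i j hij, if_neg hk.2, if_neg hk.1]

theorem Am_perm (m : Fin d → ℕ) (τ : Equiv.Perm (Fin d)) (x : Fin d → ℝ) :
    Am (m ∘ τ) x = Am m x := by
  unfold Am
  congr 1
  apply Fintype.sum_equiv (Equiv.mulRight τ⁻¹)
  intro σ
  apply Fintype.prod_equiv τ
  intro k; simp

/-- removing a part equal to one -/
theorem Am_one (m : Fin d → ℕ) (i : Fin d) (hi : m i = 1) (x : Fin d → ℝ) (hx : ∑ k, x k ^ 2 = 1) :
    ((Finset.univ.filter (fun k => Function.update m i 0 k = 0)).card : ℝ) * Am m x ≤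
      1/2 * Am (Function.update m i 0) x := by
  set Z := Finset.univ.filter (fun k => Function.update m i 0 k = 0) with hZ
  have h1 : (Z.card : ℝ) * Am m x = ∑ z ∈ Z, Am (m ∘ Equiv.swap i z) x := by
    simp [Am_perm]
  rw [h1]
  unfold Am
  rw [← Finset.mul_sum, mul_left_comm]
  apply mul_le_mul_of_nonneg_left _ (by positivity)
  rw [Finset.sum_comm, Finset.mul_sum]
  apply Finset.sum_le_sum
  intro σ _
  have h2 : ∀ z ∈ Z, ∏ k, av ((m ∘ Equiv.swap i z) k) (x (σ k)) =
      (x (σ z) ^ 2 / 2) * ∏ k, av (Function.update m i 0 k) (x (σ k)) := by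
    intro z hz
    have hz : Function.update m i 0 z = 0 := by simpa [hZ] using hz
    rw [← Finset.mul_prod_erase Finset.univ _ (Finset.mem_univ z), ← Finset.mul_prod_erase Finset.univ (fun k => av (Function.update m i 0 k) (x (σ k))) (Finset.mem_univ z)]
    rw [hz]
    have : ∏ k ∈ Finset.univ.erase z, av ((m ∘ Equiv.swap i z) k) (x (σ k)) = ∏ k ∈ Finset.univ.erase z, av (Function.update m i 0 k) (x (σ k)) := by
      apply Finset.prod_congr rfl
      intro k hk
      simp at hk
      congr 1
      by_cases hki : k = i
      · subst hki
        simp [Function.update_of_ne (Ne.symm hk)] at hz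
        simp [hz]
      · simp [Equiv.swap_apply_of_ne_of_ne hki hk, hki]
    rw [this]
    simp [av, hi]
  rw [Finset.sum_congr rfl h2, ← Finset.sum_mul]
  apply mul_le_mul_of_nonneg_right
  · rw [← Finset.sum_div]
    have : ∑ z ∈ Z, x (σ z) ^ 2 ≤ 1 := by
      rw [← hx, ← Equiv.sum_comp σ (fun k => x k ^ 2)]
      exact Finset.sum_le_univ_sum_of_nonneg (fun k => by positivity)
    linarith
  · apply Finset.prod_nonneg; intros; exact av_nonneg _ _

noncomputable def Lop (f : (Fin d → ℝ) → ℝ) : (Fin d → ℝ) → ℝ := fun x =>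
  ((d:ℝ)*((d:ℝ)-1))⁻¹ * ∑ e ∈ (Finset.univ : Finset (Fin d)).offDiag, f (rr e x)

theorem dd_nonneg (d : ℕ) : (0:ℝ) ≤ ((d:ℝ)*((d:ℝ)-1))⁻¹ := by
  rcases Nat.eq_zero_or_pos d with h | h
  · subst h; simp
  · have : (1:ℝ) ≤ d := by exact_mod_cast h
    have : (0:ℝ) ≤ (d:ℝ) - 1 := by linarith
    positivity

theorem Lop_mono (f g : (Fin d → ℝ) → ℝ) (h : ∀ x, ∑ k, x k ^ 2 = 1 → f x ≤ g x) :
    ∀ x, ∑ k, x k ^ 2 = 1 → Lop f x ≤ Lop g x := by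
  intro x hx
  unfold Lop
  apply mul_le_mul_of_nonneg_left _ (dd_nonneg d)
  apply Finset.sum_le_sum
  intro e he
  exact h _ (by rw [rr_sphere e he, hx])

theorem Lop_iter_mono (t : ℕ) : ∀ (f g : (Fin d → ℝ) → ℝ) (_ : ∀ x, ∑ k, x k ^ 2 = 1 → f x ≤ g x),
    ∀ x, ∑ k, x k ^ 2 = 1 → Lop^[t] f x ≤ Lop^[t] g x := by
  induction t with
  | zero => intro f g h; exact h
  | succ t ih =>
    intro f g h
    rw [Function.iterate_succ_apply, Function.iterate_succ_apply]
    exact ih _ _ (Lop_mono f g h)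

theorem Lop_sum {ι : Type*} (s : Finset ι) (c : ι → ℝ) (g : ι → (Fin d → ℝ) → ℝ) :
    Lop (fun x => ∑ i ∈ s, c i * g i x) = fun x => ∑ i ∈ s, c i * Lop (g i) x := by
  funext x
  unfold Lop
  rw [Finset.sum_comm, Finset.mul_sum]
  apply Finset.sum_congr rfl; intro i _
  rw [← Finset.mul_sum]; ring

theorem Lop_iter_sum (t : ℕ) {ι : Type*} (s : Finset ι) (c : ι → ℝ) : ∀ (g : ι → (Fin d → ℝ) → ℝ),
    Lop^[t] (fun x => ∑ i ∈ s, c i * g i x) = fun x => ∑ i ∈ s, c i * Lop^[t] (g i) x := by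
  induction t with
  | zero => intro g; rfl
  | succ t ih =>
    intro g
    simp only [Function.iterate_succ_apply]
    rw [Lop_sum, ih]

theorem Lop_smul (c : ℝ) (t : ℕ) (g : (Fin d → ℝ) → ℝ) :
    Lop^[t] (fun x => c * g x) = fun x => c * Lop^[t] g x := by
  have := Lop_iter_sum t (Finset.univ : Finset Unit) (fun _ => c) (fun _ => g)
  simpa using this

theorem offDiag_card (d : ℕ) : (((Finset.univ : Finset (Fin d)).offDiag.card : ℕ) : ℝ) = (d:ℝ)*((d:ℝ)-1) := by
  rw [Finset.offDiag_card]; simp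
  rw [Nat.cast_sub (Nat.le_mul_self d)]; push_cast; ring

theorem Lop_const (hd : 2 ≤ d) (c : ℝ) (t : ℕ) : Lop^[t] (fun _ : Fin d → ℝ => c) = fun _ => c := by
  apply Function.iterate_fixed
  funext x
  unfold Lop
  have : (2:ℝ) ≤ d := by exact_mod_cast hd
  have h1 : (d:ℝ) - 1 ≠ 0 := by intro h; linarith
  have h2 : (d:ℝ) ≠ 0 := by intro h; linarith
  rw [Finset.sum_const, nsmul_eq_mul, offDiag_card]
  field_simp

noncomputable def VV (m : Fin d → ℕ) : ℝ := ∏ k, vv d (m k)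

theorem VV_pos (hd : 0 < d) (m : Fin d → ℕ) : 0 < VV m :=
  Finset.prod_pos (fun k _ => vv_pos d _ hd)

theorem av_le (hd : 0 < d) (k : ℕ) (x : ℝ) (hx : x ^ 2 ≤ 1) : av k x ≤ vv d k * (d:ℝ)^k := by
  have h1 : vv d k * (d:ℝ)^k = kap k * 2^k / k.factorial := by
    unfold vv; have : (d:ℝ) ≠ 0 := by positivity
    rw [div_pow]; field_simp
  have h2 : av k x ≤ 1 / (2*k).factorial := by
    unfold av; rw [pow_mul]
    gcongr
    exact pow_le_one₀ (by positivity) hx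
  rw [h1]
  refine h2.trans ?_
  rcases Nat.lt_or_ge k 2 with h | h
  · interval_cases k
    · simp [kap]
    · simp [kap]; norm_num
  · rw [kap_big k h, div_le_div_iff₀ (by positivity) (by positivity)]
    have h3 : (k.factorial : ℝ) ≤ (2*k).factorial := by
      exact_mod_cast Nat.factorial_le (by omega)
    have h4 : (2:ℝ)^2 ≤ 2^k := pow_le_pow_right₀ (by norm_num) h
    have h5 : (0:ℝ) < (2*k).factorial := by positivity
    nlinarith

theorem Am_le_const (m : Fin d → ℕ) (x : Fin d → ℝ) (c : ℝ) (h : ∀ σ : Equiv.Perm (Fin d), ∏ k, av (m k) (x (σ k)) ≤ c) :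
    Am m x ≤ c := by
  unfold Am
  have h1 : ∑ σ : Equiv.Perm (Fin d), ∏ k, av (m k) (x (σ k)) ≤ d.factorial * c := by
    refine (Finset.sum_le_sum (fun σ _ => h σ)).trans ?_
    simp [Fintype.card_perm]
  have h2 : (0:ℝ) < d.factorial := by positivity
  rw [inv_mul_le_iff₀ h2]; exact h1

theorem Am_base (hd : 0 < d) (m : Fin d → ℕ) (x : Fin d → ℝ) (hx : ∑ k, x k ^ 2 = 1) :
    Am m x ≤ VV m * (d:ℝ)^(∑ k, m k) := by
  apply Am_le_const
  intro σ
  rw [VV, ← Finset.prod_pow_eq_pow_sum, ← Finset.prod_mul_distrib]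
  apply Finset.prod_le_prod
  · intros; exact av_nonneg _ _
  · intro k _
    apply av_le hd
    rw [← hx]
    exact Finset.single_le_sum (f := fun k => x k ^ 2) (fun _ _ => by positivity) (Finset.mem_univ _)

theorem Am_zero (x : Fin d → ℝ) : Am (fun _ => 0) x = 1 := by
  unfold Am
  have h2 : (d.factorial:ℝ) ≠ 0 := by positivity
  simp [av, Fintype.card_perm, h2]

theorem VV_one (m : Fin d → ℕ) (i : Fin d) (hi : m i = 1) :
    VV m = vv d 1 * VV (Function.update m i 0) := by
  unfold VV
  rw [← Finset.mul_prod_erase Finset.univ _ (Finset.mem_univ i),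
    ← Finset.mul_prod_erase Finset.univ (fun k => vv d (Function.update m i 0 k)) (Finset.mem_univ i)]
  simp only [Function.update_self, vv_zero, hi, one_mul]
  congr 1
  apply Finset.prod_congr rfl; intro k hk; simp at hk; simp [hk]

theorem zeros_card (m : Fin d → ℕ) :
    d ≤ (Finset.univ.filter (fun k => m k = 0)).card + ∑ k, m k := by
  have h1 : (Finset.univ.filter (fun k => m k = 0)).card + (Finset.univ.filter (fun k => ¬ m k = 0)).card = d := by
    rw [Finset.card_filter_add_card_filter_not]; simp
  have h2 : (Finset.univ.filter (fun k => ¬ m k = 0)).card ≤ ∑ k, m k := by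
    rw [Finset.card_filter]
    apply Finset.sum_le_sum; intro k _; split_ifs <;> omega
  omega

theorem sum_update (m : Fin d → ℕ) (i : Fin d) (hi : m i = 1) :
    ∑ k, m k = ∑ k, Function.update m i 0 k + 1 := by
  rw [← Finset.add_sum_erase Finset.univ _ (Finset.mem_univ i),
    ← Finset.add_sum_erase Finset.univ (fun k => Function.update m i 0 k) (Finset.mem_univ i)]
  simp only [Function.update_self, hi, zero_add]
  rw [add_comm]; congr 1
  apply Finset.sum_congr rfl; intro k hk; simp at hk; simp [hk]

/-- eliminating a part equal to one costs at most `vv d 1` -/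
theorem Am_one' (hd : 0 < d) (m : Fin d → ℕ) (i : Fin d) (hi : m i = 1)
    (hm : ((∑ k, m k : ℕ) : ℝ) ≤ 14/100 * d) (x : Fin d → ℝ) (hx : ∑ k, x k ^ 2 = 1) :
    Am m x ≤ vv d 1 * Am (Function.update m i 0) x := by
  have h := Am_one m i hi x hx
  have h1 : (d:ℝ) ≤ ((Finset.univ.filter (fun k => Function.update m i 0 k = 0)).card : ℝ) + ((∑ k, m k : ℕ) : ℝ) := by
    have := zeros_card (Function.update m i 0)
    have h2 := sum_update m i hi
    exact_mod_cast (by omega : d ≤ (Finset.univ.filter (fun k => Function.update m i 0 k = 0)).card + ∑ k, m k)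
  set N : ℝ := ((Finset.univ.filter (fun k => Function.update m i 0 k = 0)).card : ℝ)
  have hdr : (0:ℝ) < d := by exact_mod_cast hd
  have hN : 86/100 * (d:ℝ) ≤ N := by linarith
  have hv : vv d 1 = 117/200 / d := by unfold vv; simp [kap]; ring
  have hA := Am_nonneg m x
  have hB := Am_nonneg (Function.update m i 0) x
  rw [hv, div_mul_eq_mul_div, le_div_iff₀ hdr]
  nlinarith

theorem bb_sum_pair (m : Fin d → ℕ) :
    ∑ e ∈ (Finset.univ : Finset (Fin d)).offDiag, FF (m e.1) (m e.2) =
    (d:ℝ)*((d:ℝ)-1) - 82/125 * (∑ k, bb (m k)) * ((d:ℝ)-1) + 41/10 * ((∑ k, bb (m k)) - 1) * ((∑ k, m k : ℕ) : ℝ) := by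
  have hsplit : ∀ g : Fin d → Fin d → ℝ, ∑ e ∈ (Finset.univ : Finset (Fin d)).offDiag, g e.1 e.2
      = ∑ i, ∑ j, g i j - ∑ i, g i i := by
    intro g
    rw [eq_sub_iff_add_eq, ← Finset.sum_product', ← Finset.diag_union_offDiag, Finset.sum_union (Finset.disjoint_diag_offDiag _), add_comm]
    congr 1
    rw [Finset.sum_diag (f := fun e : Fin d × Fin d => g e.1 e.2)]
  have hb : ∀ k, bb (m k) * (m k : ℝ) = m k := by
    intro k; unfold bb; split_ifs with h <;> simp [h]
  have hb2 : ∀ k, bb (m k) * bb (m k) = bb (m k) := by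
    intro k; unfold bb; split_ifs with h <;> simp
  rw [hsplit (fun i j => FF (m i) (m j))]
  have e1 : ∀ i j, FF (m i) (m j) = 1 - 41/125 * bb (m i) - 41/125 * bb (m j)
      + 41/20 * ((m i : ℝ) * bb (m j)) + 41/20 * (bb (m i) * (m j : ℝ)) := by
    intro i j
    unfold FF
    linear_combination 41/20 * bb (m j) * hb i + 41/20 * bb (m i) * hb j
  have e2 : ∀ i, FF (m i) (m i) = 1 - 82/125 * bb (m i) + 41/10 * (m i : ℝ) := by
    intro i; rw [e1]; linear_combination 41/10 * hb i
  simp only [e1, Finset.sum_add_distrib, Finset.sum_sub_distrib, ← Finset.mul_sum, ← Finset.sum_mul, hb,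
    Finset.sum_const, Finset.card_univ, Fintype.card_fin, nsmul_eq_mul, mul_one]
  push_cast
  have : ∀ i, (m i : ℝ) * bb (m i) = m i := fun i => by rw [mul_comm, hb]
  simp only [this]
  ring

theorem FF_sum_le (hd : 25 ≤ d) (m : Fin d → ℕ) (hm0 : ∃ k, m k ≠ 0)
    (hm : ((∑ k, m k : ℕ) : ℝ) ≤ 14/100 * d) :
    ∑ e ∈ (Finset.univ : Finset (Fin d)).offDiag, FF (m e.1) (m e.2)
      ≤ (1 - 1/(2*d)) * ((d:ℝ)*((d:ℝ)-1)) := by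
  rw [bb_sum_pair]
  have hk : 1 ≤ ∑ k, bb (m k) := by
    obtain ⟨k, hk⟩ := hm0
    calc (1:ℝ) = bb (m k) := by simp [bb, hk]
      _ ≤ _ := Finset.single_le_sum (f := fun k => bb (m k)) (fun j _ => by unfold bb; split_ifs <;> norm_num) (Finset.mem_univ k)
  set K := ∑ k, bb (m k)
  have hdr : (25:ℝ) ≤ d := by exact_mod_cast hd
  have h1 : (1 - 1/(2*d)) * ((d:ℝ)*((d:ℝ)-1)) = (d:ℝ)*((d:ℝ)-1) - ((d:ℝ)-1)/2 := by
    have : (d:ℝ) ≠ 0 := by positivity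
    field_simp
  rw [h1]
  have h2 : (K-1) * ((∑ k, m k : ℕ) : ℝ) ≤ (K-1) * (14/100*d) := mul_le_mul_of_nonneg_left hm (by linarith)
  nlinarith [mul_nonneg (sub_nonneg.2 hk) (by linarith : (0:ℝ) ≤ d - 25)]

theorem VV_up (m : Fin d → ℕ) (i j : Fin d) (hij : i ≠ j) (l : ℕ) :
    VV (up m (i,j) l) = vv d l * vv d (m i + m j - l) * ∏ k ∈ (Finset.univ.erase i).erase j, vv d (m k) := by
  unfold VV
  rw [prod_two i j hij, up_fst m i j hij, up_snd]
  congr 1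
  apply Finset.prod_congr rfl; intro k hk; rw [up_oth m i j l k hk]

theorem VV_pair (hd : 0 < d) (m : Fin d → ℕ) (h1 : ∀ k, m k ≠ 1) (i j : Fin d) (hij : i ≠ j) :
    ∑ l ∈ Finset.range (m i + m j + 1), |cc (m i) (m j) l| * VV (up m (i,j) l) ≤ FF (m i) (m j) * VV m := by
  have h := pair_bound d (m i) (m j) hd (h1 i) (h1 j)
  have hP : 0 ≤ ∏ k ∈ (Finset.univ.erase i).erase j, vv d (m k) :=
    Finset.prod_nonneg (fun k _ => (vv_pos d _ hd).le)
  have e : VV m = vv d (m i) * vv d (m j) * ∏ k ∈ (Finset.univ.erase i).erase j, vv d (m k) := by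
    unfold VV; rw [prod_two i j hij]
  simp only [VV_up m i j hij]
  rw [e, ← mul_assoc]
  refine le_trans (le_of_eq ?_) (mul_le_mul_of_nonneg_right h hP)
  rw [Finset.sum_mul]
  apply Finset.sum_congr rfl; intro l _; ring

theorem Lop_Am (m : Fin d → ℕ) :
    Lop (Am m) = fun x => ∑ a ∈ (Finset.univ : Finset (Fin d)).offDiag.sigma (fun e => Finset.range (m e.1 + m e.2 + 1)),
      (((d:ℝ)*((d:ℝ)-1))⁻¹ * cc (m a.1.1) (m a.1.2) a.2) * Am (up m a.1 a.2) x := by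
  funext x
  rw [Finset.sum_sigma]
  unfold Lop
  rw [Am_step, Finset.mul_sum]
  apply Finset.sum_congr rfl; intro e _
  rw [Finset.mul_sum]
  apply Finset.sum_congr rfl; intro l _
  ring

theorem Lop_iter_nonneg (t : ℕ) : ∀ (f : (Fin d → ℝ) → ℝ) (_ : ∀ x, 0 ≤ f x) (x), 0 ≤ Lop^[t] f x := by
  induction t with
  | zero => intro f h; exact h
  | succ t ih =>
    intro f h
    rw [Function.iterate_succ_apply]
    apply ih
    intro x
    exact mul_nonneg (dd_nonneg d) (Finset.sum_nonneg (fun e _ => h _))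

theorem Am_decay (hd : 25 ≤ d) (m : Fin d → ℕ) (h1 : ∀ k, m k ≠ 1) (hm0 : ∃ k, m k ≠ 0)
    (hm : ((∑ k, m k : ℕ) : ℝ) ≤ 14/100 * d) (t : ℕ) (X : ℝ) (hX : 0 ≤ X) (x : Fin d → ℝ)
    (ih : ∀ m' : Fin d → ℕ, ∑ k, m' k = ∑ k, m k → Lop^[t] (Am m') x ≤ VV m' * X) :
    Lop^[t+1] (Am m) x ≤ VV m * ((1 - 1/(2*d)) * X) := by
  have hd0 : 0 < d := by omega
  have hdr : (25:ℝ) ≤ d := by exact_mod_cast hd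
  rw [Function.iterate_succ_apply, Lop_Am, Lop_iter_sum]
  beta_reduce
  rw [Finset.sum_sigma]
  have hV := VV_pos hd0 m
  calc _ ≤ ∑ e ∈ (Finset.univ : Finset (Fin d)).offDiag, ((d:ℝ)*((d:ℝ)-1))⁻¹ * (FF (m e.1) (m e.2) * VV m * X) := by
        apply Finset.sum_le_sum
        rintro ⟨i, j⟩ he
        have hij : i ≠ j := by simpa using he
        simp only [mul_assoc]
        rw [← Finset.mul_sum]
        apply mul_le_mul_of_nonneg_left _ (dd_nonneg d)
        have hp := mul_le_mul_of_nonneg_right (VV_pair hd0 m h1 i j hij) hX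
        rw [← mul_assoc]
        refine le_trans ?_ hp
        rw [Finset.sum_mul]
        apply Finset.sum_le_sum
        intro l hl
        have hl' : l ≤ m i + m j := by simp at hl; omega
        have h2 := ih (up m (i,j) l) (up_sum m i j hij l hl')
        have h3 := Lop_iter_nonneg t (Am (up m (i,j) l)) (Am_nonneg _) x
        calc _ ≤ |cc (m i) (m j) l| * Lop^[t] (Am (up m (i,j) l)) x :=
              mul_le_mul_of_nonneg_right (le_abs_self _) h3
          _ ≤ |cc (m i) (m j) l| * (VV (up m (i,j) l) * X) := mul_le_mul_of_nonneg_left h2 (abs_nonneg _)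
          _ = _ := by ring
    _ = ((d:ℝ)*((d:ℝ)-1))⁻¹ * (VV m * X) * ∑ e ∈ (Finset.univ : Finset (Fin d)).offDiag, FF (m e.1) (m e.2) := by
        rw [Finset.mul_sum]; apply Finset.sum_congr rfl; intro e _; ring
    _ ≤ ((d:ℝ)*((d:ℝ)-1))⁻¹ * (VV m * X) * ((1 - 1/(2*d)) * ((d:ℝ)*((d:ℝ)-1))) := by
        apply mul_le_mul_of_nonneg_left (FF_sum_le hd m hm0 hm)
        exact mul_nonneg (dd_nonneg d) (mul_nonneg hV.le hX)
    _ = _ := by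
        have h1 : (d:ℝ) - 1 ≠ 0 := by intro h; linarith
        have h2 : (d:ℝ) ≠ 0 := by intro h; linarith
        field_simp

theorem Am_claim (hd : 25 ≤ d) (p : ℕ) (hp : (p:ℝ) ≤ 14/100 * d) : ∀ (t n : ℕ) (m : Fin d → ℕ), ∑ k, m k = n → n ≤ p →
    ∀ x : Fin d → ℝ, ∑ k, x k ^ 2 = 1 →
    Lop^[t] (Am m) x ≤ VV m * max 1 ((d:ℝ)^p * (1 - 1/(2*d))^t) := by
  have hd0 : 0 < d := by omega
  have hdr : (25:ℝ) ≤ d := by exact_mod_cast hd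
  have hr0 : (0:ℝ) ≤ 1 - 1/(2*d) := by
    rw [sub_nonneg, div_le_one (by positivity)]; linarith
  have hr1 : (1:ℝ) - 1/(2*d) ≤ 1 := by
    have : (0:ℝ) ≤ 1/(2*d) := by positivity
    linarith
  intro t
  induction t with
  | zero =>
    intro n m hmn hnp x hx
    simp only [Function.iterate_zero, id, pow_zero, mul_one]
    refine (Am_base hd0 m x hx).trans ?_
    apply mul_le_mul_of_nonneg_left _ (VV_pos hd0 m).le
    refine le_trans ?_ (le_max_right _ _)
    exact pow_le_pow_right₀ (by linarith) (by omega)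
  | succ t iht =>
    intro n
    induction n with
    | zero =>
      intro m hmn _ x hx
      have hm : m = fun _ => 0 := by
        funext k
        have := Finset.sum_eq_zero_iff.1 hmn k (Finset.mem_univ k)
        exact this
      have hA : Am m = fun _ => (1:ℝ) := by funext y; rw [hm, Am_zero]
      rw [hA, Lop_const (by omega)]
      have : VV m = 1 := by rw [hm]; simp [VV, vv_zero]
      rw [this, one_mul]; exact le_max_left _ _
    | succ n ihn =>
      intro m hmn hnp x hx
      have hmr : ((∑ k, m k : ℕ) : ℝ) ≤ 14/100 * d := by
        refine le_trans ?_ hp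
        exact_mod_cast (by omega : ∑ k, m k ≤ p)
      by_cases h1 : ∃ i, m i = 1
      · obtain ⟨i, hi⟩ := h1
        have h2 := Lop_iter_mono (t+1) (Am m) (fun x => vv d 1 * Am (Function.update m i 0) x)
          (Am_one' hd0 m i hi hmr) x hx
        rw [Lop_smul] at h2
        have h3 := ihn (Function.update m i 0) (by have := sum_update m i hi; omega) (by omega) x hx
        refine h2.trans ?_
        rw [VV_one m i hi, mul_assoc]
        exact mul_le_mul_of_nonneg_left h3 (vv_pos d 1 hd0).le
      · push Not at h1
        have hm0 : ∃ k, m k ≠ 0 := by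
          by_contra h
          push Not at h
          simp [h] at hmn
        have h4 := Am_decay hd m h1 hm0 hmr t (max 1 ((d:ℝ)^p * (1 - 1/(2*d))^t)) (by positivity) x
          (fun m' hm' => iht (n+1) m' (by omega) hnp x hx)
        refine h4.trans ?_
        apply mul_le_mul_of_nonneg_left _ (VV_pos hd0 m).le
        rw [mul_max_of_nonneg _ _ hr0]
        apply max_le_max
        · simpa using hr1
        · apply le_of_eq; rw [pow_succ]; ring

theorem rho_decay (hd : 25 ≤ d) (p t : ℕ) (ht : 2 * p * d * Real.log d ≤ t) :
    (d:ℝ)^p * (1 - 1/(2*d))^t ≤ 1 := by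
  have hdr : (25:ℝ) ≤ d := by exact_mod_cast hd
  have hr0 : (0:ℝ) ≤ 1 - 1/(2*d) := by
    rw [sub_nonneg, div_le_one (by positivity)]; linarith
  have h1 : (1:ℝ) - 1/(2*d) ≤ Real.exp (-(1/(2*d))) := by
    have := Real.add_one_le_exp (-(1/(2*(d:ℝ)))); linarith
  have h2 : (d:ℝ) = Real.exp (Real.log d) := (Real.exp_log (by linarith)).symm
  calc (d:ℝ)^p * (1 - 1/(2*d))^t ≤ (Real.exp (Real.log d))^p * (Real.exp (-(1/(2*d))))^t := by
        rw [← h2]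
        exact mul_le_mul_of_nonneg_left (pow_le_pow_left₀ hr0 h1 t) (by positivity)
    _ = Real.exp (p * Real.log d - t / (2*d)) := by
        rw [← Real.exp_nat_mul, ← Real.exp_nat_mul, ← Real.exp_add]; congr 1; ring
    _ ≤ 1 := by
        rw [Real.exp_le_one_iff, sub_nonpos, le_div_iff₀ (by positivity)]
        linarith

theorem Sk_eq_Am (p : ℕ) (i : Fin d) (y : Fin d → ℝ) :
    Sk p y = d * Am (Function.update (fun _ => 0) i p) y := by
  have h0 : ∀ σ : Equiv.Perm (Fin d), ∏ k, av (Function.update (fun _ : Fin d => 0) i p k) (y (σ k)) = av p (y (σ i)) := by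
    intro σ
    rw [← Finset.mul_prod_erase Finset.univ _ (Finset.mem_univ i), Finset.prod_eq_one]
    · simp
    · intro k hk; simp at hk; simp [hk, av]
  have hA : ∀ j : Fin d, Am (Function.update (fun _ => 0) j p) y = Am (Function.update (fun _ => 0) i p) y := by
    intro j
    rw [← Am_perm (Function.update (fun _ => 0) i p) (Equiv.swap i j)]
    congr 1
    funext k
    simp only [Function.comp, Function.update_apply]
    congr 1
    rw [Equiv.swap_apply_eq_iff]; simp
  have h1 : (d:ℝ) * Am (Function.update (fun _ => 0) i p) y = ∑ j, Am (Function.update (fun _ => 0) j p) y := by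
    simp [hA]
  have h0' : ∀ (j : Fin d) (σ : Equiv.Perm (Fin d)), ∏ k, av (Function.update (fun _ : Fin d => 0) j p k) (y (σ k)) = av p (y (σ j)) := by
    intro j σ
    rw [← Finset.mul_prod_erase Finset.univ _ (Finset.mem_univ j), Finset.prod_eq_one]
    · simp
    · intro k hk; simp at hk; simp [hk, av]
  rw [h1]
  unfold Am
  simp only [h0']
  rw [← Finset.mul_sum, Finset.sum_comm]
  have h2 : ∀ σ : Equiv.Perm (Fin d), ∑ j, av p (y (σ j)) = ∑ j, av p (y j) := fun σ => Equiv.sum_comp σ (fun j => av p (y j))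
  simp only [h2, Finset.sum_const, Finset.card_univ, Fintype.card_perm, Fintype.card_fin, nsmul_eq_mul]
  have h3 : (d.factorial:ℝ) ≠ 0 := by positivity
  rw [inv_mul_cancel_left₀ h3]
  unfold Sk av
  rw [← Finset.sum_div, div_eq_inv_mul]

theorem Sk_small (hd : 25 ≤ d) (p : ℕ) (hp2 : 2 ≤ p) (hp : (p:ℝ) ≤ 14/100 * d) (t : ℕ)
    (ht : 2 * p * d * Real.log d ≤ t) (x : Fin d → ℝ) (hx : ∑ k, x k ^ 2 = 1) :
    Lop^[t] (Sk p) x ≤ d * ((1/4) * (2/(d:ℝ))^p / p.factorial) := by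
  have hS : (Sk p : (Fin d → ℝ) → ℝ) = fun y => d * Am (Function.update (fun _ => 0) ⟨0, by omega⟩ p) y := by
    funext y; exact Sk_eq_Am p _ y
  rw [hS, Lop_smul]
  apply mul_le_mul_of_nonneg_left _ (by positivity)
  have h := Am_claim hd p hp t p (Function.update (fun _ => 0) ⟨0, by omega⟩ p) (by simp [Finset.sum_update_of_mem]) le_rfl x hx
  refine h.trans ?_
  rw [max_eq_left (rho_decay hd p t ht), mul_one]
  apply le_of_eq
  unfold VV
  rw [← Finset.mul_prod_erase Finset.univ _ (Finset.mem_univ ⟨0, by omega⟩), Finset.prod_eq_one]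
  · simp [vv, kap_big p hp2]
  · intro k hk; simp at hk; simp [hk, vv_zero]

noncomputable def RR (d p : ℕ) : ℝ := d * ((1/4) * (2/(d:ℝ))^p / p.factorial)

theorem RR_nonneg (d p : ℕ) : 0 ≤ RR d p := by unfold RR; positivity

theorem RR_eq (hd : 0 < d) (p : ℕ) :
    (2 : ℝ) ^ ((p : ℤ) - 2) * (d : ℝ) ^ ((1 : ℤ) - p) / (p.factorial : ℝ) = RR d p := by
  have h : (d:ℝ) ≠ 0 := by positivity
  rw [zpow_sub₀ two_ne_zero, zpow_sub₀ h, zpow_natCast, zpow_natCast, zpow_one, RR, div_pow]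
  have h2 : (2:ℝ)^(2:ℤ) = 4 := by norm_num
  rw [h2]; ring

theorem RR_step (hd : 0 < d) (q : ℕ) (hq : d ≤ 8*q+4) :
    ((2*q).factorial : ℝ) * RR d q ≤ ((2*(q+1)).factorial : ℝ) * RR d (q+1) := by
  have hdr : (0:ℝ) < d := by exact_mod_cast hd
  have hqr : (d:ℝ) ≤ 8*q+4 := by exact_mod_cast hq
  have e : ((2*(q+1)).factorial : ℝ) * RR d (q+1) = (((2*q).factorial : ℝ) * RR d q) * ((8*q+4)/d) := by
    unfold RR
    rw [show 2*(q+1) = 2*q+1+1 by ring, Nat.factorial_succ, Nat.factorial_succ, Nat.factorial_succ, pow_succ]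
    have h1 : (q.factorial : ℝ) ≠ 0 := by positivity
    have h2 : (q:ℝ)+1 ≠ 0 := by positivity
    push_cast
    field_simp
    ring
  rw [e]
  apply le_mul_of_one_le_right
  · exact mul_nonneg (by positivity) (RR_nonneg d q)
  · rw [le_div_iff₀ hdr]; linarith

theorem RR_mono (hd : 0 < d) (q p : ℕ) (hq : d ≤ 8*q+4) (hqp : q ≤ p) :
    ((2*q).factorial : ℝ) * RR d q ≤ ((2*p).factorial : ℝ) * RR d p := by
  induction p, hqp using Nat.le_induction with
  | base => exact le_rfl
  | succ p hp ih => exact ih.trans (RR_step hd p (by omega))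

theorem Sk_all (hd : 25 ≤ d) (p : ℕ) (hp1 : 1 ≤ p) (t : ℕ)
    (ht : 2 * p * d * Real.log d ≤ t) (x : Fin d → ℝ) (hx : ∑ k, x k ^ 2 = 1) :
    Lop^[t] (Sk p) x ≤ RR d p := by
  have hd0 : 0 < d := by omega
  have hdr : (25:ℝ) ≤ d := by exact_mod_cast hd
  have small : ∀ q : ℕ, 2 ≤ q → q ≤ (d+3)/8 → q ≤ p → Lop^[t] (Sk q) x ≤ RR d q := by
    intro q hq2 hq hqp
    apply Sk_small hd q hq2 _ t _ x hx
    · have h1 : 8*q ≤ d+3 := by omega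
      have h2 : 8*(q:ℝ) ≤ d+3 := by exact_mod_cast h1
      linarith
    · refine le_trans ?_ ht
      have h3 : (q:ℝ) ≤ p := by exact_mod_cast hqp
      have h4 : 0 ≤ Real.log d := Real.log_nonneg (by linarith)
      gcongr
  rcases Nat.lt_or_ge p 2 with h | h
  · have hp : p = 1 := by omega
    subst hp
    have h1 := Lop_iter_mono t (Sk 1 : (Fin d → ℝ) → ℝ) (fun _ => 1/2) (by
      intro y hy; unfold Sk; simp [hy]) x hx
    rw [Lop_const (by omega)] at h1
    refine h1.trans (le_of_eq ?_)
    unfold RR; field_simp; norm_num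
  · rcases Nat.lt_or_ge ((d+3)/8) p with hlt | hge
    · set q := (d+3)/8 with hq
      have hf : (0:ℝ) < (2*p).factorial := by positivity
      have h1 := Lop_iter_mono t (Sk p : (Fin d → ℝ) → ℝ)
        (fun y => (((2*q).factorial : ℝ) / (2*p).factorial) * Sk q y) (by
          intro y hy
          unfold Sk
          have hq0 : ((2*q).factorial : ℝ) ≠ 0 := by positivity
          have e : ((2*q).factorial : ℝ) / (2*p).factorial * (((2*q).factorial : ℝ)⁻¹ * ∑ i, y i ^ (2*q))
            = ((2*p).factorial : ℝ)⁻¹ * ∑ i, y i ^ (2*q) := by field_simp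
          rw [e]
          apply mul_le_mul_of_nonneg_left _ (by positivity)
          apply Finset.sum_le_sum
          intro i _
          rw [pow_mul, pow_mul]
          apply pow_le_pow_of_le_one (by positivity) _ hlt.le
          rw [← hy]
          exact Finset.single_le_sum (f := fun k => y k ^ 2) (fun _ _ => by positivity) (Finset.mem_univ _)) x hx
      rw [Lop_smul] at h1
      refine h1.trans ?_
      have h2 := small q (by omega) le_rfl hlt.le
      have h3 := RR_mono hd0 q p (by omega) hlt.le
      beta_reduce
      rw [div_mul_eq_mul_div, div_le_iff₀ hf]
      calc _ ≤ ((2*q).factorial : ℝ) * RR d q := mul_le_mul_of_nonneg_left h2 (by positivity)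
        _ ≤ _ := h3
        _ = _ := mul_comm _ _
    · exact small p h hge le_rfl

theorem pairUniform_real (hd : 2 ≤ d) (e : Fin d × Fin d) :
    (pairUniform d).real {e} = if e.1 ≠ e.2 then ((d:ℝ)*((d:ℝ)-1))⁻¹ else 0 := by
  have hc : (((d * (d-1) : ℕ) : ℝ≥0∞)⁻¹).toReal = ((d:ℝ)*((d:ℝ)-1))⁻¹ := by
    rw [ENNReal.toReal_inv, ENNReal.toReal_natCast, Nat.cast_mul, Nat.cast_sub (by omega)]; simp
  unfold pairUniform
  rw [measureReal_ennreal_smul_apply, hc, measureReal_restrict_apply (MeasurableSet.singleton e)]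
  by_cases h : e.1 = e.2
  · have : ({e} ∩ {p : Fin d × Fin d | p.1 ≠ p.2}) = ∅ := by
      ext a; simp; rintro rfl; exact h
    rw [this]; simp [h]
  · have : ({e} ∩ {p : Fin d × Fin d | p.1 ≠ p.2}) = {e} := by
      ext a; simp; rintro rfl; exact h
    rw [this]; simp [h, Measure.real]

theorem pairUniform_finite (hd : 2 ≤ d) : IsFiniteMeasure (pairUniform d) := by
  constructor
  unfold pairUniform
  rw [Measure.smul_apply, smul_eq_mul]
  apply ENNReal.mul_lt_top
  · rw [ENNReal.inv_lt_top]
    have : 0 < d * (d-1) := Nat.mul_pos (by omega) (by omega)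
    exact_mod_cast this
  · exact measure_lt_top _ _

theorem ora_cons {T : ℕ} (a : Fin d × Fin d) (ω : Fin T → Fin d × Fin d) (x : Fin d → ℝ) :
    (oraMatrix (Fin.cons a ω : Fin (T+1) → Fin d × Fin d)).mulVec x = (oraMatrix ω).mulVec (rr a x) := by
  unfold oraMatrix rr
  rw [List.ofFn_succ, List.reverse_cons, List.prod_append, List.prod_singleton, Matrix.mulVec_mulVec]
  simp

theorem sum_ora (f : (Fin d → ℝ) → ℝ) (t : ℕ) : ∀ x : Fin d → ℝ,
    ∑ ω : Fin t → Fin d × Fin d,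
      (∏ i, (if (ω i).1 ≠ (ω i).2 then ((d:ℝ)*((d:ℝ)-1))⁻¹ else 0)) * f ((oraMatrix ω).mulVec x)
    = Lop^[t] f x := by
  induction t with
  | zero => intro x; simp [oraMatrix]
  | succ t ih =>
    intro x
    rw [← Equiv.sum_comp (Fin.consEquiv (fun _ => Fin d × Fin d)), Fintype.sum_prod_type]
    have h : ∀ a : Fin d × Fin d, ∑ ω : Fin t → Fin d × Fin d,
        (∏ i, (if ((Fin.cons a ω : Fin (t+1) → Fin d × Fin d) i).1 ≠ ((Fin.cons a ω : Fin (t+1) → Fin d × Fin d) i).2 then ((d:ℝ)*((d:ℝ)-1))⁻¹ else 0))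
          * f ((oraMatrix (Fin.cons a ω : Fin (t+1) → Fin d × Fin d)).mulVec x)
        = (if a.1 ≠ a.2 then ((d:ℝ)*((d:ℝ)-1))⁻¹ else 0) * Lop^[t] f (rr a x) := by
      intro a
      rw [← ih, Finset.mul_sum]
      apply Finset.sum_congr rfl
      intro ω _
      rw [ora_cons, Fin.prod_univ_succ]
      simp only [Fin.cons_zero, Fin.cons_succ]
      ring
    refine (Finset.sum_congr rfl (fun a _ => h a)).trans ?_
    rw [Function.iterate_succ_apply']
    unfold Lop
    have ho : (Finset.univ : Finset (Fin d)).offDiag = Finset.univ.filter (fun e : Fin d × Fin d => e.1 ≠ e.2) := by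
      ext e; simp
    rw [ho, Finset.sum_filter, Finset.mul_sum]
    apply Finset.sum_congr rfl
    intro e _
    split_ifs <;> simp

theorem int_ora (hd : 2 ≤ d) (f : (Fin d → ℝ) → ℝ) (t : ℕ) (x : Fin d → ℝ) :
    ∫ ω, f ((oraMatrix ω).mulVec x) ∂(Measure.pi fun _ : Fin t => pairUniform d) = Lop^[t] f x := by
  haveI := pairUniform_finite hd
  rw [integral_fintype Integrable.of_finite, ← sum_ora]
  apply Finset.sum_congr rfl
  intro ω _
  rw [smul_eq_mul]
  congr 1
  rw [Measure.real, Measure.pi_singleton, ENNReal.toReal_prod]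
  apply Finset.prod_congr rfl
  intro i _
  exact pairUniform_real hd (ω i)

end Walk

/-- **Proposition 4.3**: decay of the weighted moments `S_p` along orthogonal repeated
averaging, for a (possibly random) starting point on the sphere independent of the walk. -/
theorem ora_moment_mixing :
    ∃ C : ℝ, 0 < C ∧
      ∀ (d : ℕ), 25 ≤ d →
      ∀ {Ω : Type} [MeasurableSpace Ω] (μ : Measure Ω), IsProbabilityMeasure μ →
      ∀ (x : Ω → Fin d → ℝ), Measurable x → (∀ ω, ∑ i, x ω i ^ 2 = 1) →
      ∀ p : ℕ, 1 ≤ p → p ≤ d →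
      ∀ t : ℕ, C * p * d * Real.log d ≤ t →
      (∫ z, Sk p ((oraMatrix z.1).mulVec (x z.2))
          ∂((Measure.pi fun _ : Fin t => pairUniform d).prod μ)) ≤
        (2 : ℝ) ^ ((p : ℤ) - 2) * (d : ℝ) ^ ((1 : ℤ) - p) / (p.factorial : ℝ) := by
  refine ⟨2.25, by norm_num, ?_⟩
  intro d hd Ω _ μ hμ x hxm hx p hp1 hpd t ht
  have hd0 : 0 < d := by omega
  have hdr : (25:ℝ) ≤ d := by exact_mod_cast hd
  rw [RR_eq hd0 p]
  haveI := pairUniform_finite (show 2 ≤ d by omega)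
  have ht' : 2 * p * d * Real.log d ≤ t := by
    refine le_trans ?_ ht
    have h4 : 0 ≤ Real.log d := Real.log_nonneg (by linarith)
    gcongr
    norm_num
  by_cases hInn : Integrable (fun z : (Fin t → Fin d × Fin d) × Ω => Sk p ((oraMatrix z.1).mulVec (x z.2)))
      ((Measure.pi fun _ : Fin t => pairUniform d).prod μ)
  · rw [integral_prod_symm _ hInn]
    calc _ ≤ ∫ _ : Ω, RR d p ∂μ := by
          apply integral_mono hInn.integral_prod_right (integrable_const _)
          intro ω
          refine le_trans (le_of_eq (int_ora (by omega) (Sk p) t (x ω))) ?_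
          exact Sk_all hd p hp1 t ht' (x ω) (hx ω)
      _ = RR d p := by simp
  · rw [integral_undef hInn]; exact RR_nonneg d p

end KacJL
end
end
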